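/- arXiv:2505.22127 — 10 statements merged into one kernel-verified Lean document; each statement's English description precedes it below -/
import Mathlib

section
/- Let n ≥ 2 and let (i_1,…,i_N) with N = n(n−1)/2 and each i_t ∈ {1,…,n−1} be a reduced word for the longest element w_0 of the symmetric group S_n (i.e. s_{i_1}s_{i_2}⋯s_{i_N} = w_0). Then the sequence (1,2,…,n−1) occurs as a subsequence of (i_1,…,i_N): there exist indices t_1 < t_2 < ⋯ < t_{n−1} with i_{t_k} = k for every 1 ≤ k ≤ n−1. -/
/-!
Read the word from left to right and follow the wire which starts at level `a` and ends at level
`b`, where `a` is the image of `b` under the product. Each letter moves the wire by at most one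
level, and only the letter `k` moves it from level `k` up to level `k + 1`. Hence the word contains
the letters `a, a + 1, …, b - 1` in this order. For `w₀` the wire starting at level `1` ends at
level `n`.
-/

/-- The adjacent transposition `s_j` swapping `j` and `j+1` (acting on `ℕ`,
restricting to the usual generator of the symmetric group on `{1, …, n}`). -/
def adjSwap (j : ℕ) : Equiv.Perm ℕ := Equiv.swap j (j + 1)

lemma Ico_sublist_cons_Ico_succ (a b : ℕ) :
    (List.Ico a b).Sublist (a :: List.Ico (a + 1) b) := by
  rcases lt_or_ge a b with hab | hba
  · rw [List.Ico.eq_cons hab]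
  · simp [List.Ico.eq_nil_of_le hba]

lemma Ico_succ_sublist_Ico (a b : ℕ) : (List.Ico (a + 1) b).Sublist (List.Ico a b) := by
  rcases lt_or_ge a b with hab | hba
  · rw [List.Ico.eq_cons hab]
    exact List.sublist_cons_self a _
  · simp [List.Ico.eq_nil_of_le (Nat.le_succ_of_le hba)]

lemma Ico_sublist_of_prod_map_adjSwap_apply_eq {a b : ℕ} {word : List ℕ}
    (hword : (word.map adjSwap).prod b = a) : (List.Ico a b).Sublist word := by
  induction word generalizing a with
  | nil => simp [← hword]
  | cons j word ih =>
    have htail : (word.map adjSwap).prod b = adjSwap j a := by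
      rwa [List.map_cons, List.prod_cons, Equiv.Perm.mul_apply, adjSwap,
        Equiv.swap_apply_eq_iff] at hword
    have hsub := ih htail
    rcases eq_or_ne a j with rfl | hj
    · rw [adjSwap, Equiv.swap_apply_left] at hsub
      exact (Ico_sublist_cons_Ico_succ a b).trans (hsub.cons_cons a)
    rcases eq_or_ne a (j + 1) with rfl | hj'
    · rw [adjSwap, Equiv.swap_apply_right] at hsub
      exact ((Ico_succ_sublist_Ico j b).trans hsub).cons j
    · rw [adjSwap, Equiv.swap_apply_of_ne_of_ne hj hj'] at hsub
      exact hsub.cons j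

theorem pattern_one_to_nsub1_subsequence_general (a b N : ℕ) (i : ℕ → ℕ)
    (hword : (((List.range N).map fun t => adjSwap (i (t + 1))).prod : Equiv.Perm ℕ) (b + 1) = a) :
    ∃ t : ℕ → ℕ,
      (∀ k ∈ Finset.Icc a b, t k ∈ Finset.Icc 1 N) ∧
      (∀ k, a ≤ k → k + 1 ≤ b → t k < t (k + 1)) ∧
      (∀ k ∈ Finset.Icc a b, i (t k) = k) := by
  have hsub : (List.Ico a (b + 1)).Sublist ((List.range N).map fun t => i (t + 1)) :=
    Ico_sublist_of_prod_map_adjSwap_apply_eq (by simpa [Function.comp_def] using hword)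
  obtain ⟨f, hf⟩ := List.sublist_iff_exists_orderEmbedding_getElem?_eq.mp hsub
  have hletter : ∀ k ∈ Finset.Icc a b, f (k - a) < N ∧ i (f (k - a) + 1) = k := by
    intro k hk
    obtain ⟨hak, hkb⟩ := Finset.mem_Icc.mp hk
    have hk_get : (List.Ico a (b + 1))[k - a]? = some k := by
      rw [List.Ico, List.getElem?_range' (by omega)]
      congr 1
      omega
    simpa [List.getElem?_eq_some_iff] using (hf (k - a)).symm.trans hk_get
  refine ⟨fun k => f (k - a) + 1, fun k hk => ?_, fun k hak _ => ?_, fun k hk => (hletter k hk).2⟩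
  · exact Finset.mem_Icc.mpr ⟨Nat.le_add_left 1 _, (hletter k hk).1⟩
  · exact Nat.succ_lt_succ (f.strictMono (by omega))

/-- if `(i 1, …, i N)`, `N = n(n-1)/2`, is a (necessarily reduced) word
for the longest element `w₀` of `Sₙ` (i.e. `s_{i 1} ⋯ s_{i N} = w₀`, where
`w₀ j = n + 1 - j` on `{1, …, n}`), then the pattern `(1, 2, …, n-1)` occurs as a
subsequence of `(i 1, …, i N)`. -/
theorem pattern_one_to_nsub1_subsequence
    (n N : ℕ) (hn : 2 ≤ n) (hN : N = n * (n - 1) / 2)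
    (i : ℕ → ℕ) (hi : ∀ t ∈ Finset.Icc 1 N, 1 ≤ i t ∧ i t ≤ n - 1)
    (hword : ∀ j ∈ Finset.Icc 1 n,
      (((List.range N).map fun t => adjSwap (i (t + 1))).prod : Equiv.Perm ℕ) j
        = n + 1 - j) :
    ∃ t : ℕ → ℕ,
      (∀ k ∈ Finset.Icc 1 (n - 1), t k ∈ Finset.Icc 1 N) ∧
      (∀ k, 1 ≤ k → k + 1 ≤ n - 1 → t k < t (k + 1)) ∧
      (∀ k ∈ Finset.Icc 1 (n - 1), i (t k) = k) := by
  obtain ⟨m, rfl⟩ := Nat.exists_eq_add_of_le' hn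
  exact pattern_one_to_nsub1_subsequence_general 1 (m + 1) N i (by simp [hword])
end

section
/- Let n ≥ 2 and let (i_1,…,i_N), N = n(n−1)/2, be a reduced word for the longest element w_0 of S_n. Let t_1 < t_2 < ⋯ < t_{n−1} be the greedy indices for the pattern (1,2,…,n−1): t_1 is minimal with i_{t_1} = 1, and for k ≥ 2, t_k is minimal subject to t_k > t_{k−1} and i_{t_k} = k. For 0 ≤ t ≤ N set w^{(t)} := s_{i_t} ∘ s_{i_{t−1}} ∘ ⋯ ∘ s_{i_1} (composition of functions on {1,…,n}, applying s_{i_1} first; w^{(0)} = id). Then for every 1 ≤ k ≤ n−1 one has w^{(t_k − 1)}(1) = k. (Equivalently: in the wiring diagram of the reduced word, each greedy crossing t_k lies on the wire ℓ_1, which sits at level k just before that crossing; these are exactly the crossings of ℓ_1 with the other wires, as used for the weight-zero string z_1.) -/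
/-! A reduced word is as long as its permutation has inversions, so each letter creates one. A new
inversion arises only between a wire moving up and a larger wire moving down, so a crossing at which
the smallest wire moves down would create none. Hence wire `1` never moves down: it stays at level
`k` until the next letter `k`, which takes it to level `k + 1`. -/

theorem adjSwap_mul_self (j : ℕ) : adjSwap j * adjSwap j = 1 :=
  Equiv.swap_mul_self j (j + 1)

theorem adjSwap_apply_lt_apply_iff {j x y : ℕ} (hxy : x < y) :
    adjSwap j y < adjSwap j x ↔ x = j ∧ y = j + 1 := by
  simp only [adjSwap, Equiv.swap_apply_def]
  split_ifs <;> omega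

/-- The inversions of the permutation `w` among the wires in `s`: the pairs of wires of `s` which
`w` puts in the opposite order, smaller wire first. -/
def inversions (s : Finset ℕ) (w : Equiv.Perm ℕ) : Finset (ℕ × ℕ) :=
  {x ∈ s ×ˢ s | x.1 < x.2 ∧ w x.2 < w x.1}

section Inversions

variable {s : Finset ℕ} {w : Equiv.Perm ℕ} {j : ℕ} {x : ℕ × ℕ}

theorem mem_inversions :
    x ∈ inversions s w ↔ (x.1 ∈ s ∧ x.2 ∈ s) ∧ x.1 < x.2 ∧ w x.2 < w x.1 := by
  rw [inversions, Finset.mem_filter, Finset.mem_product]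

theorem inversions_one (s : Finset ℕ) : inversions s 1 = ∅ :=
  Finset.filter_false_of_mem fun _ _ h => lt_asymm h.1 h.2

theorem card_inversions_of_strictAntiOn (hw : StrictAntiOn w s) :
    (inversions s w).card = s.card.choose 2 := by
  have hpairs : inversions s w = {x ∈ s ×ˢ s | x.1 < x.2} :=
    Finset.filter_congr fun x hx =>
      and_iff_left_of_imp (hw (Finset.mem_product.mp hx).1 (Finset.mem_product.mp hx).2)
  rw [hpairs, Finset.card_product_filter_lt]

theorem mem_inversions_of_mem_inversions_adjSwap_mul
    (hx : x ∈ inversions s (adjSwap j * w)) :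
    x ∈ inversions s w ∨ w x.1 = j ∧ w x.2 = j + 1 := by
  obtain ⟨hs, hlt, hinv⟩ := mem_inversions.mp hx
  rcases (w.injective.ne hlt.ne).lt_or_gt with h | h
  · exact Or.inr ((adjSwap_apply_lt_apply_iff h).mp hinv)
  · exact Or.inl (mem_inversions.mpr ⟨hs, hlt, h⟩)

theorem card_inversions_adjSwap_mul_le (s : Finset ℕ) (w : Equiv.Perm ℕ) (j : ℕ) :
    (inversions s (adjSwap j * w)).card ≤ (inversions s w).card + 1 := by
  have hsub : inversions s (adjSwap j * w) ⊆
      insert (w.symm j, w.symm (j + 1)) (inversions s w) := by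
    intro x hx
    rcases mem_inversions_of_mem_inversions_adjSwap_mul hx with h | ⟨h₁, h₂⟩
    · exact Finset.mem_insert_of_mem h
    · rw [← h₂, ← h₁, Equiv.symm_apply_apply, Equiv.symm_apply_apply]
      exact Finset.mem_insert_self _ _
  exact (Finset.card_le_card hsub).trans (Finset.card_insert_le _ _)

theorem inversions_adjSwap_mul_subset {a : ℕ} (ha : a ∈ lowerBounds (s : Set ℕ))
    (hj : w a = j + 1) :
    inversions s (adjSwap j * w) ⊆ inversions s w := by
  intro x hx
  refine (mem_inversions_of_mem_inversions_adjSwap_mul hx).resolve_right fun ⟨_, h₂⟩ => ?_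
  obtain ⟨hs, hlt, _⟩ := mem_inversions.mp hx
  have hxa : x.2 = a := w.injective (h₂.trans hj.symm)
  exact (hlt.trans_eq hxa).not_ge (ha hs.1)

end Inversions

/-- The permutation `w⁽ᵐ⁾ = s_{i m} ∘ ⋯ ∘ s_{i 1}` of the wiring diagram of the word `i 1, i 2, …`:
after the first `m` crossings, the wire starting at level `p` is at level `wiring i m p`. -/
def wiring (i : ℕ → ℕ) : ℕ → Equiv.Perm ℕ
  | 0 => 1
  | m + 1 => adjSwap (i (m + 1)) * wiring i m

section Wiring

variable {i : ℕ → ℕ} {s : Finset ℕ} {a k m n N : ℕ}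

theorem eq_wiring {W : ℕ → Equiv.Perm ℕ} (hW0 : W 0 = 1)
    (hWs : ∀ m, W (m + 1) = adjSwap (i (m + 1)) * W m) : W = wiring i := by
  funext m
  induction m with
  | zero => exact hW0
  | succ m ih => rw [hWs, ih, wiring]

theorem prod_adjSwap_mul_wiring (i : ℕ → ℕ) (m : ℕ) :
    ((List.range m).map fun t => adjSwap (i (t + 1))).prod * wiring i m = 1 := by
  induction m with
  | zero => rfl
  | succ m ih =>
    rw [List.prod_range_succ, wiring, mul_assoc, ← mul_assoc (adjSwap _) (adjSwap _),
      adjSwap_mul_self, one_mul, ih]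

theorem card_inversions_wiring_le (i : ℕ → ℕ) (s : Finset ℕ) (m : ℕ) :
    (inversions s (wiring i m)).card ≤ m := by
  induction m with
  | zero => simp only [wiring, inversions_one, Finset.card_empty, le_refl]
  | succ m ih => exact (card_inversions_adjSwap_mul_le s _ _).trans (Nat.succ_le_succ ih)

/-- The word `i 1, …, i N` is reduced on the wires in `s`: its length is the number of inversions
of its permutation. -/
def IsReducedOn (i : ℕ → ℕ) (s : Finset ℕ) (N : ℕ) : Prop :=
  (inversions s (wiring i N)).card = N

theorem IsReducedOn.of_le (h : IsReducedOn i s N) (hm : m ≤ N) : IsReducedOn i s m := by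
  induction hm using Nat.decreasingInduction with
  | self => exact h
  | of_succ m _ ih =>
    have hle : (inversions s (wiring i (m + 1))).card ≤ (inversions s (wiring i m)).card + 1 :=
      card_inversions_adjSwap_mul_le s _ _
    rw [ih] at hle
    exact (card_inversions_wiring_le i s m).antisymm (Nat.le_of_succ_le_succ hle)

theorem IsReducedOn.wiring_apply_ne (h : IsReducedOn i s N)
    (ha : a ∈ lowerBounds (s : Set ℕ)) (hm : m < N) :
    wiring i m a ≠ i (m + 1) + 1 := by
  intro hdesc
  have hle := Finset.card_le_card (inversions_adjSwap_mul_subset ha hdesc)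
  rw [← wiring, h.of_le hm, h.of_le hm.le] at hle
  exact Nat.not_succ_le_self m hle

theorem IsReducedOn.wiring_apply_eq_of_forall_ne {b c : ℕ}
    (h : IsReducedOn i s N) (ha : a ∈ lowerBounds (s : Set ℕ)) (hbc : b ≤ c) (hc : c ≤ N)
    (hk : wiring i b a = k) (hne : ∀ r, b < r → r ≤ c → i r ≠ k) : wiring i c a = k := by
  induction c, hbc using Nat.le_induction with
  | base => exact hk
  | succ c hbc ih =>
    have hstay : wiring i c a = k :=
      ih (Nat.le_of_succ_le hc) fun r hbr hrc => hne r hbr (Nat.le_succ_of_le hrc)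
    have hdesc : k ≠ i (c + 1) + 1 := hstay ▸ h.wiring_apply_ne ha hc
    rw [wiring, Equiv.Perm.mul_apply, hstay]
    exact Equiv.swap_apply_of_ne_of_ne (hne (c + 1) (Nat.lt_succ_of_le hbc) le_rfl).symm hdesc

theorem wiring_apply_eq_succ {t : ℕ} (ht : 1 ≤ t) (hletter : i t = k)
    (hk : wiring i (t - 1) a = k) : wiring i t a = k + 1 := by
  obtain ⟨m, rfl⟩ := Nat.exists_eq_add_of_le' ht
  rw [wiring, Equiv.Perm.mul_apply, hletter, ← hk]
  exact Equiv.swap_apply_left _ _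

theorem isReducedOn_of_prod_apply (hN : N = n * (n - 1) / 2)
    (hword : ∀ j ∈ Finset.Icc 1 n,
      ((List.range N).map fun t => adjSwap (i (t + 1))).prod j = n + 1 - j) :
    IsReducedOn i (Finset.Icc 1 n) N := by
  have hrev : ∀ p ∈ Finset.Icc 1 n, wiring i N p = n + 1 - p := by
    intro p hp
    rw [Finset.mem_Icc] at hp
    rw [eq_inv_of_mul_eq_one_right (prod_adjSwap_mul_wiring i N), Equiv.Perm.inv_eq_iff_eq,
      hword _ (by simp only [Finset.mem_Icc]; omega)]
    omega
  have hanti : StrictAntiOn (wiring i N) (Finset.Icc 1 n : Finset ℕ) := by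
    intro p hp q hq hpq
    rw [hrev p hp, hrev q hq]
    have hqn : q ≤ n := (Finset.mem_Icc.mp hq).2
    omega
  rw [IsReducedOn, card_inversions_of_strictAntiOn hanti, Nat.card_Icc, Nat.add_sub_cancel,
    Nat.choose_two_right, hN]

theorem greedy_crossings_on_wire_one_general {t : ℕ → ℕ}
    (hred : IsReducedOn i (Finset.Icc 1 n) N)
    (ht_range : ∀ k ∈ Finset.Icc 1 m, t k ∈ Finset.Icc 1 N)
    (ht_letter : ∀ k ∈ Finset.Icc 1 m, i (t k) = k)
    (ht_mono : ∀ k, 1 ≤ k → k + 1 ≤ m → t k < t (k + 1))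
    (ht_min1 : ∀ r ∈ Finset.Icc 1 N, r < t 1 → i r ≠ 1)
    (ht_min : ∀ k, 2 ≤ k → k ≤ m → ∀ r ∈ Finset.Icc 1 N, t (k - 1) < r → r < t k → i r ≠ k) :
    ∀ k ∈ Finset.Icc 1 m, wiring i (t k - 1) 1 = k := by
  have hone : 1 ∈ lowerBounds ((Finset.Icc 1 n : Finset ℕ) : Set ℕ) :=
    fun p hp => (Finset.mem_Icc.mp hp).1
  simp only [Finset.mem_Icc, and_imp] at ht_range ht_letter ht_min1 ht_min ⊢
  intro k hk hkm
  induction k, hk using Nat.le_induction with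
  | base =>
    have ht_one := ht_range 1 le_rfl hkm
    exact hred.wiring_apply_eq_of_forall_ne hone (Nat.zero_le _) (by omega) rfl
      fun r h0r hrt => ht_min1 r h0r (by omega) (by omega)
  | succ k hk ih =>
    have hkm' : k ≤ m := Nat.le_of_succ_le hkm
    have ht_succ := ht_range (k + 1) (Nat.le_add_left 1 k) hkm
    have hup : wiring i (t k) 1 = k + 1 :=
      wiring_apply_eq_succ (ht_range k hk hkm').1 (ht_letter k hk hkm') (ih hkm')
    exact hred.wiring_apply_eq_of_forall_ne hone (Nat.le_sub_one_of_lt (ht_mono k hk hkm))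
      (by omega) hup fun r htr hrt =>
        ht_min (k + 1) (by omega) hkm r (by omega) (by omega) htr (by omega)

end Wiring

/-- for a reduced word `(i 1, …, i N)`, `N = n(n-1)/2`, of the longest
element `w₀` of `Sₙ`, with greedy indices `t 1 < ⋯ < t (n-1)` for the pattern
`(1, 2, …, n-1)`, and with `W m = s_{i m} ∘ ⋯ ∘ s_{i 1}` (applying `s_{i 1}` first,
`W 0 = id`), one has `W (t k - 1) 1 = k` for all `1 ≤ k ≤ n-1`. -/
theorem greedy_crossings_on_wire_one
    (n N : ℕ) (hn : 2 ≤ n) (hN : N = n * (n - 1) / 2)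
    (i : ℕ → ℕ) (hi : ∀ t ∈ Finset.Icc 1 N, 1 ≤ i t ∧ i t ≤ n - 1)
    (hword : ∀ j ∈ Finset.Icc 1 n,
      (((List.range N).map fun t => adjSwap (i (t + 1))).prod : Equiv.Perm ℕ) j
        = n + 1 - j)
    (t : ℕ → ℕ)
    (ht_range : ∀ k ∈ Finset.Icc 1 (n - 1), t k ∈ Finset.Icc 1 N)
    (ht_letter : ∀ k ∈ Finset.Icc 1 (n - 1), i (t k) = k)
    (ht_mono : ∀ k, 1 ≤ k → k + 1 ≤ n - 1 → t k < t (k + 1))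
    (ht_min1 : ∀ r ∈ Finset.Icc 1 N, r < t 1 → i r ≠ 1)
    (ht_min : ∀ k, 2 ≤ k → k ≤ n - 1 →
      ∀ r ∈ Finset.Icc 1 N, t (k - 1) < r → r < t k → i r ≠ k)
    (W : ℕ → Equiv.Perm ℕ) (hW0 : W 0 = 1)
    (hWs : ∀ m, W (m + 1) = adjSwap (i (m + 1)) * W m) :
    ∀ k ∈ Finset.Icc 1 (n - 1), W (t k - 1) 1 = k := by
  obtain rfl : W = wiring i := eq_wiring hW0 hWs
  exact greedy_crossings_on_wire_one_general (isReducedOn_of_prod_apply hN hword)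
    ht_range ht_letter ht_mono ht_min1 ht_min
end

section
/- Let n ≥ 2 and let (i_1,…,i_N), N = n(n−1)/2, be a reduced word for the longest element w_0 of S_n, with greedy indices t_1 < ⋯ < t_{n−1} for the pattern (n−1, n−2, …, 1) (t_1 minimal with i_{t_1} = n−1; t_k minimal with t_k > t_{k−1} and i_{t_k} = n−k). Set w^{(t)} := s_{i_t} ∘ ⋯ ∘ s_{i_1} and define j_k := (w^{(t_k − 1)})^{-1}(n−k) for 1 ≤ k ≤ n−1, i.e. j_k is the label of the wire crossing wire ℓ_n at the greedy crossing t_k. Then j_1, …, j_{n−1} are pairwise distinct and {j_1, …, j_{n−1}} = {1, 2, …, n−1}. -/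
/-!
Any two wires that end up in the opposite order must cross, with the smaller label coming from
below. A word of `w₀` has exactly as many crossings as there are pairs `a < b` in `{1, …, n}`, so
each such pair is the pair of wires at exactly one crossing. In particular wire `n` is the upper
wire at all its crossings: it only ever moves down, one level at a time, and the greedy indices are
precisely its crossings. Its partners are distinct because no pair crosses twice, and they lie in
`{1, …, n - 1}`, which has as many elements as there are greedy indices.
-/

/-- The permutation `s_{i m} ∘ ⋯ ∘ s_{i 1}`, sending each wire to its level after `m` crossings.
The letters of the word are `i 1, i 2, …`. -/
def wordPerm (i : ℕ → ℕ) : ℕ → Equiv.Perm ℕ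
  | 0 => 1
  | m + 1 => adjSwap (i (m + 1)) * wordPerm i m

/-- The wires meeting at crossing `m + 1`, the one arriving from below first. -/
def crossing (i : ℕ → ℕ) (m : ℕ) : ℕ × ℕ :=
  ((wordPerm i m)⁻¹ (i (m + 1)), (wordPerm i m)⁻¹ (i (m + 1) + 1))

/-- The indices `t 1 < ⋯ < t K` in `{1, …, N}` are the greedy occurrence of the pattern
`(c 1, …, c K)` in the word `(i 1, …, i N)`: each `t k` is the first index after `t (k - 1)`
(after `0`, for `k = 1`) whose letter is `c k`. -/
structure IsGreedyOccurrence (i : ℕ → ℕ) (N : ℕ) (c : ℕ → ℕ) (K : ℕ) (t : ℕ → ℕ) : Prop where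
  mem_Icc : ∀ k ∈ Finset.Icc 1 K, t k ∈ Finset.Icc 1 N
  letter : ∀ k ∈ Finset.Icc 1 K, i (t k) = c k
  lt_succ : ∀ k, 1 ≤ k → k + 1 ≤ K → t k < t (k + 1)
  ne_of_lt_first : ∀ r ∈ Finset.Icc 1 N, r < t 1 → i r ≠ c 1
  ne_of_between : ∀ k, 2 ≤ k → k ≤ K → ∀ r ∈ Finset.Icc 1 N, t (k - 1) < r → r < t k → i r ≠ c k

section Wires

variable {i : ℕ → ℕ} {N m a b : ℕ}

theorem eq_wordPerm {W : ℕ → Equiv.Perm ℕ} (hzero : W 0 = 1)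
    (hsucc : ∀ m, W (m + 1) = adjSwap (i (m + 1)) * W m) : W = wordPerm i := by
  funext m
  induction m with
  | zero => exact hzero
  | succ m ih => rw [hsucc, ih, wordPerm]

theorem prod_map_adjSwap_eq_inv_wordPerm (i : ℕ → ℕ) (m : ℕ) :
    ((List.range m).map fun t => adjSwap (i (t + 1))).prod = (wordPerm i m)⁻¹ := by
  induction m with
  | zero => simp [wordPerm]
  | succ m ih => rw [List.prod_range_succ, ih, wordPerm, mul_inv_rev, adjSwap, Equiv.swap_inv]

theorem wordPerm_succ_apply (i : ℕ → ℕ) (m a : ℕ) :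
    wordPerm i (m + 1) a =
      if wordPerm i m a = i (m + 1) then i (m + 1) + 1
      else if wordPerm i m a = i (m + 1) + 1 then i (m + 1) else wordPerm i m a :=
  Equiv.swap_apply_def _ _ _

theorem crossing_eq_iff :
    crossing i m = (a, b) ↔ wordPerm i m a = i (m + 1) ∧ wordPerm i m b = i (m + 1) + 1 := by
  rw [crossing, Prod.mk.injEq, Equiv.Perm.inv_eq_iff_eq, Equiv.Perm.inv_eq_iff_eq, eq_comm,
    @eq_comm _ (i (m + 1) + 1)]

theorem crossing_eq_of_lt_of_lt (hbefore : wordPerm i m a < wordPerm i m b)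
    (hafter : wordPerm i (m + 1) b < wordPerm i (m + 1) a) : crossing i m = (a, b) := by
  rw [crossing_eq_iff]
  rw [wordPerm_succ_apply, wordPerm_succ_apply] at hafter
  split_ifs at hafter <;> omega

theorem exists_crossing_eq (hab : a < b) (hN : wordPerm i N b < wordPerm i N a) :
    ∃ m < N, crossing i m = (a, b) := by
  induction N with
  | zero => exact absurd hN hab.not_gt
  | succ N ih =>
    rcases lt_or_gt_of_ne ((wordPerm i N).injective.ne hab.ne) with hlt | hgt
    · exact ⟨N, N.lt_succ_self, crossing_eq_of_lt_of_lt hlt hN⟩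
    · obtain ⟨m, hm, hcross⟩ := ih hgt
      exact ⟨m, hm.trans N.lt_succ_self, hcross⟩

/-- With `s` the set of all inversions of `wordPerm i N`, the hypothesis `hcard` says that the word
is reduced. -/
theorem bijOn_crossing_of_card_le {s : Finset (ℕ × ℕ)}
    (hinv : ∀ p ∈ s, p.1 < p.2 ∧ wordPerm i N p.2 < wordPerm i N p.1) (hcard : N ≤ s.card) :
    Set.BijOn (crossing i) (Finset.range N) s := by
  have hsub : s ⊆ (Finset.range N).image (crossing i) := fun p hp => by
    obtain ⟨m, hm, hcross⟩ := exists_crossing_eq (hinv p hp).1 (hinv p hp).2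
    exact Finset.mem_image.2 ⟨m, Finset.mem_range.2 hm, hcross⟩
  have hle : (Finset.range N).card ≤ s.card := by rwa [Finset.card_range]
  rw [← Finset.image_eq_iff_bijOn_of_card hle]
  exact (Finset.eq_of_subset_of_card_le hsub (Finset.card_image_le.trans hle)).symm

theorem strictAntiOn_wordPerm_of_inv_apply_eq {n : ℕ}
    (hrev : ∀ j ∈ Finset.Icc 1 n, (wordPerm i N)⁻¹ j = n + 1 - j) :
    StrictAntiOn (wordPerm i N) (Finset.Icc 1 n) := by
  have hlevel : ∀ a ∈ Finset.Icc 1 n, wordPerm i N a = n + 1 - a := by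
    intro a ha
    rw [Finset.mem_Icc] at ha
    have hinv := hrev (n + 1 - a) (Finset.mem_Icc.2 (by omega))
    rw [Equiv.Perm.inv_eq_iff_eq] at hinv
    rw [hinv]
    congr 1
    omega
  intro a ha b hb hab
  rw [hlevel a ha, hlevel b hb]
  rw [Finset.mem_coe, Finset.mem_Icc] at hb
  omega

theorem bijOn_crossing_of_inv_apply_eq {n : ℕ} (hN : N ≤ n.choose 2)
    (hrev : ∀ j ∈ Finset.Icc 1 n, (wordPerm i N)⁻¹ j = n + 1 - j) :
    Set.BijOn (crossing i) (Set.Iio N) {p | 1 ≤ p.1 ∧ p.1 < p.2 ∧ p.2 ≤ n} := by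
  set s := Finset.Icc 1 n with hs
  have hbij := bijOn_crossing_of_card_le (i := i) (N := N) (s := {p ∈ s ×ˢ s | p.1 < p.2})
    (fun p hp => by
      obtain ⟨hmem, hlt⟩ := Finset.mem_filter.1 hp
      obtain ⟨hfst, hsnd⟩ := Finset.mem_product.1 hmem
      exact ⟨hlt, strictAntiOn_wordPerm_of_inv_apply_eq hrev hfst hsnd hlt⟩)
    (by rwa [Finset.card_product_filter_lt, hs, Nat.card_Icc, Nat.add_sub_cancel])
  convert hbij using 1
  · exact (Finset.coe_range N).symm
  · ext p
    simp only [hs, Finset.coe_filter, Finset.mem_product, Finset.mem_Icc, Set.mem_ofPred_eq]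
    omega

end Wires

section Greedy

variable {i t : ℕ → ℕ} {N K a k : ℕ}

theorem wordPerm_apply_eq_of_forall_letter_ne {m m' x : ℕ} (hmm' : m ≤ m')
    (hlower : ∀ r < m', (crossing i r).1 ≠ a) (hx : wordPerm i m a = x + 1)
    (hne : ∀ r, m < r → r ≤ m' → i r ≠ x) : wordPerm i m' a = x + 1 := by
  induction m', hmm' using Nat.le_induction with
  | base => exact hx
  | succ m' hmm' ih =>
    have hlevel := ih (fun r hr => hlower r (by omega)) fun r hmr hr => hne r hmr (by omega)
    have hup : i (m' + 1) ≠ wordPerm i m' a := fun h =>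
      hlower m' m'.lt_succ_self (Equiv.Perm.inv_eq_iff_eq.2 h)
    have hdown := hne (m' + 1) (by omega) le_rfl
    rw [wordPerm_succ_apply]
    split_ifs <;> omega

namespace IsGreedyOccurrence

theorem mapsTo_sub_one {c : ℕ → ℕ} (ht : IsGreedyOccurrence i N c K t) :
    Set.MapsTo (fun k => t k - 1) (Set.Icc 1 K) (Set.Iio N) := by
  intro k hk
  have htk := Finset.mem_Icc.1 (ht.mem_Icc k (Finset.mem_Icc.2 hk))
  exact (Nat.sub_one_lt_of_le htk.1 le_rfl).trans_le htk.2

theorem injOn_sub_one {c : ℕ → ℕ} (ht : IsGreedyOccurrence i N c K t)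
    (hc : Set.InjOn c (Set.Icc 1 K)) : Set.InjOn (fun k => t k - 1) (Set.Icc 1 K) := by
  intro k hk l hl hkl
  have hkK := Finset.mem_Icc.2 hk
  have hlK := Finset.mem_Icc.2 hl
  have hidx : t k = t l := Nat.sub_one_cancel (Finset.mem_Icc.1 (ht.mem_Icc k hkK)).1
    (Finset.mem_Icc.1 (ht.mem_Icc l hlK)).1 hkl
  exact hc hk hl (by rw [← ht.letter k hkK, ← ht.letter l hlK, hidx])

theorem wordPerm_apply (ht : IsGreedyOccurrence i N (fun k => a - k) K t) (hK : K ≤ a)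
    (hlower : ∀ r < N, (crossing i r).1 ≠ a) (hk : 1 ≤ k) (hkK : k ≤ K) :
    wordPerm i (t k - 1) a = a - k + 1 := by
  have hrange : ∀ l, 1 ≤ l → l ≤ K → 1 ≤ t l ∧ t l ≤ N := fun l hl hlK =>
    Finset.mem_Icc.1 (ht.mem_Icc l (Finset.mem_Icc.2 ⟨hl, hlK⟩))
  induction k, hk using Nat.le_induction with
  | base =>
    obtain ⟨-, htN⟩ := hrange 1 le_rfl hkK
    have hstart : wordPerm i 0 a = a - 1 + 1 := by rw [wordPerm, Equiv.Perm.one_apply]; omega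
    exact wordPerm_apply_eq_of_forall_letter_ne (Nat.zero_le _) (fun r hr => hlower r (by omega))
      hstart fun r hr hrt => ht.ne_of_lt_first r (Finset.mem_Icc.2 (by omega)) (by omega)
  | succ k hk ih =>
    obtain ⟨htk, -⟩ := hrange k hk (by omega)
    obtain ⟨-, htN⟩ := hrange (k + 1) (by omega) hkK
    have hlt := ht.lt_succ k hk hkK
    have hcross : wordPerm i (t k) a = a - (k + 1) + 1 := by
      have hletter := ht.letter k (Finset.mem_Icc.2 ⟨hk, by omega⟩)
      have hstep := wordPerm_succ_apply i (t k - 1) a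
      rw [Nat.sub_add_cancel htk, ih (by omega), hletter, if_neg (by omega), if_pos rfl] at hstep
      omega
    exact wordPerm_apply_eq_of_forall_letter_ne (by omega) (fun r hr => hlower r (by omega))
      hcross fun r hr hrt =>
        ht.ne_of_between (k + 1) (by omega) hkK r (Finset.mem_Icc.2 (by omega)) hr (by omega)

theorem crossing_eq (ht : IsGreedyOccurrence i N (fun k => a - k) K t) (hK : K ≤ a)
    (hlower : ∀ r < N, (crossing i r).1 ≠ a) (hk : k ∈ Set.Icc 1 K) :
    crossing i (t k - 1) = ((wordPerm i (t k - 1))⁻¹ (a - k), a) := by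
  have hkK := Finset.mem_Icc.2 hk
  rw [crossing_eq_iff, Nat.sub_add_cancel (Finset.mem_Icc.1 (ht.mem_Icc k hkK)).1,
    ht.letter k hkK]
  exact ⟨Equiv.apply_symm_apply _ _, ht.wordPerm_apply hK hlower hk.1 hk.2⟩

end IsGreedyOccurrence

end Greedy

/-- for a reduced word `(i 1, …, i N)`, `N = n(n-1)/2`, of the longest
element `w₀` of `Sₙ`, with greedy indices `t 1 < ⋯ < t (n-1)` for the pattern
`(n-1, n-2, …, 1)`, setting `W m = s_{i m} ∘ ⋯ ∘ s_{i 1}` and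
`j_k = (W (t k - 1))⁻¹ (n - k)` (the label of the wire crossing wire `ℓₙ` at the
greedy crossing `t k`), the `j_k` are pairwise distinct and
`{j_1, …, j_{n-1}} = {1, 2, …, n-1}`. -/
theorem greedy_crossing_partners_wire_n
    (n N : ℕ) (hn : 2 ≤ n) (hN : N = n * (n - 1) / 2)
    (i : ℕ → ℕ) (hi : ∀ t ∈ Finset.Icc 1 N, 1 ≤ i t ∧ i t ≤ n - 1)
    (hword : ∀ j ∈ Finset.Icc 1 n,
      (((List.range N).map fun t => adjSwap (i (t + 1))).prod : Equiv.Perm ℕ) j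
        = n + 1 - j)
    (t : ℕ → ℕ)
    (ht_range : ∀ k ∈ Finset.Icc 1 (n - 1), t k ∈ Finset.Icc 1 N)
    (ht_letter : ∀ k ∈ Finset.Icc 1 (n - 1), i (t k) = n - k)
    (ht_mono : ∀ k, 1 ≤ k → k + 1 ≤ n - 1 → t k < t (k + 1))
    (ht_min1 : ∀ r ∈ Finset.Icc 1 N, r < t 1 → i r ≠ n - 1)
    (ht_min : ∀ k, 2 ≤ k → k ≤ n - 1 →
      ∀ r ∈ Finset.Icc 1 N, t (k - 1) < r → r < t k → i r ≠ n - k)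
    (W : ℕ → Equiv.Perm ℕ) (hW0 : W 0 = 1)
    (hWs : ∀ m, W (m + 1) = adjSwap (i (m + 1)) * W m) :
    Set.InjOn (fun k => ((W (t k - 1))⁻¹ : Equiv.Perm ℕ) (n - k)) (Set.Icc 1 (n - 1)) ∧
    (fun k => ((W (t k - 1))⁻¹ : Equiv.Perm ℕ) (n - k)) '' Set.Icc 1 (n - 1)
      = Set.Icc 1 (n - 1) := by
  obtain rfl := eq_wordPerm hW0 hWs
  have ht : IsGreedyOccurrence i N (fun k => n - k) (n - 1) t :=
    ⟨ht_range, ht_letter, ht_mono, ht_min1, ht_min⟩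
  have hbij : Set.BijOn (crossing i) (Set.Iio N) {p | 1 ≤ p.1 ∧ p.1 < p.2 ∧ p.2 ≤ n} :=
    bijOn_crossing_of_inv_apply_eq (by rw [Nat.choose_two_right, hN])
      (prod_map_adjSwap_eq_inv_wordPerm i N ▸ hword)
  have hlower : ∀ r < N, (crossing i r).1 ≠ n := fun r hr =>
    ((hbij.mapsTo hr).2.1.trans_le (hbij.mapsTo hr).2.2).ne
  have hcross : ∀ k ∈ Set.Icc 1 (n - 1),
      crossing i (t k - 1) = ((wordPerm i (t k - 1))⁻¹ (n - k), n) := fun k hk =>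
    ht.crossing_eq (Nat.sub_le n 1) hlower hk
  have hmaps : Set.MapsTo (fun k => (wordPerm i (t k - 1))⁻¹ (n - k))
      (Set.Icc 1 (n - 1)) (Set.Icc 1 (n - 1)) := fun k hk => by
    obtain ⟨hpos, hlt, -⟩ := hcross k hk ▸ hbij.mapsTo (ht.mapsTo_sub_one hk)
    exact ⟨hpos, Nat.le_sub_one_of_lt hlt⟩
  have hletters : Set.InjOn (fun k => n - k) (Set.Icc 1 (n - 1)) := fun k hk l hl hkl => by grind
  have hinj : Set.InjOn (fun k => (wordPerm i (t k - 1))⁻¹ (n - k)) (Set.Icc 1 (n - 1)) :=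
    fun k hk l hl hkl => hbij.injOn.comp (ht.injOn_sub_one hletters) ht.mapsTo_sub_one hk hl
      ((hcross k hk).trans ((congrArg (·, n) hkl).trans (hcross l hl).symm))
  exact ⟨hinj, ((Set.finite_Icc _ _).injOn_iff_bijOn_of_mapsTo hmaps |>.1 hinj).image_eq⟩
end

section
/- Let n ≥ 3 and let (i_1,…,i_N), N = n(n−1)/2, be a reduced word for the longest element w_0 of S_n, with greedy indices t_1 < ⋯ < t_{n−1} for the pattern (1,2,…,n−1) (t_1 minimal with i_{t_1} = 1; t_k minimal with t_k > t_{k−1} and i_{t_k} = k). Define z ∈ {0,1}^N by z_r = 1 if r ∈ {t_1,…,t_{n−1}} and z_r = 0 otherwise. Then z satisfies Littelmann's string inequalities for the highest root θ: for every 1 ≤ r ≤ N, z_r ≤ ⟨θ − Σ_{r<j≤N} z_j α_{i_j}, α^∨_{i_r}⟩. -/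
/-- The type `A` Cartan pairing `⟨α_p, α_q^∨⟩`: `2` if `p = q`, `-1` if `|p - q| = 1`,
and `0` otherwise. -/
def cartan (p q : ℕ) : ℤ :=
  if p = q then 2 else if p + 1 = q ∨ q + 1 = p then -1 else 0

/-- The pairing `⟨θ, α_p^∨⟩` of the highest root `θ = α_1 + ⋯ + α_{n-1}` of `sl_n`
(`n ≥ 3`) with the simple coroots: `1` if `p ∈ {1, n-1}`, `0` otherwise. -/
def thetaPair (n p : ℕ) : ℤ := if p = 1 ∨ p = n - 1 then 1 else 0

/-!
Write `p = i r`. Since `θ = ∑ α_k` and exactly one `α_k` is subtracted at each greedy index `t k`,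
the weight paired with `α_p^∨` in the `r`-th inequality is the sum of the `α_k` with `t k ≤ r`.
The greedy indices increase, so these are `α_1, …, α_m` for some `m`, and the pairing telescopes to
`[p = 1] + [p = m] - [p = m + 1]`. Greediness rules out `p = m + 1`: position `r` would have been
selected as `t (m + 1)`. If `z r = 1` then `r = t p`, so `p = m` and the pairing is at least `1`.
-/

open Finset

theorem cartan_add_one_left (k p : ℕ) :
    cartan (k + 1) p =
      2 * (if p = k + 1 then 1 else 0) - (if p = k then 1 else 0)
        - (if p = k + 2 then 1 else 0) := by
  unfold cartan
  split_ifs <;> omega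

theorem sum_Icc_cartan (m : ℕ) {p : ℕ} (hp : 1 ≤ p) :
    ∑ k ∈ Icc 1 m, cartan k p =
      (if p = 1 then 1 else 0) + (if p = m then 1 else 0) - (if p = m + 1 then 1 else 0) := by
  induction m with
  | zero => simp [Nat.one_le_iff_ne_zero.mp hp]
  | succ m ih =>
    rw [sum_Icc_succ_top (Nat.le_add_left 1 m), ih, cartan_add_one_left]
    ring

theorem thetaPair_eq_sum_cartan {n p : ℕ} (hn : 3 ≤ n) (hp : p ∈ Icc 1 (n - 1)) :
    thetaPair n p = ∑ k ∈ Icc 1 (n - 1), cartan k p := by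
  obtain ⟨one_le_p, p_le⟩ := mem_Icc.mp hp
  rw [sum_Icc_cartan (n - 1) one_le_p, thetaPair]
  split_ifs <;> omega

theorem sum_indicator_image_mul {ι κ R : Type*} [DecidableEq ι] [NonAssocSemiring R]
    (u : Finset ι) {s : Finset κ} {t : κ → ι} {i : ι → κ} (h_left : ∀ k ∈ s, i (t k) = k)
    (f : κ → R) :
    ∑ j ∈ u, (if j ∈ s.image t then 1 else 0) * f (i j) = ∑ k ∈ s with t k ∈ u, f k := by
  have t_injOn : Set.InjOn t ({k ∈ s | t k ∈ u} : Finset κ) :=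
    Set.LeftInvOn.injOn fun k hk => h_left k (mem_of_mem_filter k hk)
  calc ∑ j ∈ u, (if j ∈ s.image t then 1 else 0) * f (i j)
      = ∑ j ∈ u ∩ s.image t, f (i j) := by
        simp only [ite_mul, one_mul, zero_mul, sum_ite_mem]
    _ = ∑ j ∈ {k ∈ s | t k ∈ u}.image t, f (i j) := by
        rw [inter_comm, ← filter_mem_eq_inter, filter_image]
    _ = ∑ k ∈ s with t k ∈ u, f k := by
        rw [sum_image t_injOn]
        exact sum_congr rfl fun k hk => by rw [h_left k (mem_of_mem_filter k hk)]

/-- The largest `k ≤ M` with `t k ≤ r`. When `t` increases on `{1, …, M}`, this is the number of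
letters of the pattern `(1, …, M)`, selected at the positions `t 1 < ⋯ < t M`, that have been found
once position `r` is read. It is `0` if there are none; the value `t 0` has no influence. -/
def matchedLength (t : ℕ → ℕ) (M r : ℕ) : ℕ := Nat.findGreatest (fun k => t k ≤ r) M

section matchedLength

variable {t : ℕ → ℕ} {M : ℕ}

theorem matchedLength_le (r : ℕ) : matchedLength t M r ≤ M :=
  Nat.findGreatest_le M

theorem le_matchedLength_iff (h_mono : MonotoneOn t (Set.Icc 1 M)) {k : ℕ}
    (hk : k ∈ Icc 1 M) (r : ℕ) : k ≤ matchedLength t M r ↔ t k ≤ r := by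
  obtain ⟨one_le_k, k_le⟩ := mem_Icc.mp hk
  refine ⟨fun k_le_length => ?_, fun t_le =>
    Nat.le_findGreatest (P := fun k => t k ≤ r) k_le t_le⟩
  have one_le_length : 1 ≤ matchedLength t M r := one_le_k.trans k_le_length
  calc t k ≤ t (matchedLength t M r) :=
        h_mono ⟨one_le_k, k_le⟩ ⟨one_le_length, matchedLength_le r⟩ k_le_length
    _ ≤ r := Nat.findGreatest_of_ne_zero (P := fun k => t k ≤ r) rfl
        (Nat.one_le_iff_ne_zero.mp one_le_length)

theorem filter_Icc_le_eq_Icc_matchedLength (h_mono : MonotoneOn t (Set.Icc 1 M)) (r : ℕ) :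
    {k ∈ Icc 1 M | t k ≤ r} = Icc 1 (matchedLength t M r) := by
  ext k
  rw [mem_filter, and_congr_right fun hk => (le_matchedLength_iff h_mono hk r).symm]
  have length_le : matchedLength t M r ≤ M := matchedLength_le r
  simp only [mem_Icc]
  omega

theorem matchedLength_apply (h_mono : StrictMonoOn t (Set.Icc 1 M)) {k : ℕ}
    (hk : k ∈ Icc 1 M) : matchedLength t M (t k) = k := by
  have k_le_length : k ≤ matchedLength t M (t k) :=
    (le_matchedLength_iff h_mono.monotoneOn hk _).mpr le_rfl
  have length_mem : matchedLength t M (t k) ∈ Icc 1 M :=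
    mem_Icc.mpr ⟨(mem_Icc.mp hk).1.trans k_le_length, matchedLength_le _⟩
  have t_length_le : t (matchedLength t M (t k)) ≤ t k :=
    (le_matchedLength_iff h_mono.monotoneOn length_mem _).mp le_rfl
  exact le_antisymm
    ((h_mono.le_iff_le (mem_Icc.mp length_mem) (mem_Icc.mp hk)).mp t_length_le) k_le_length

theorem letter_ne_matchedLength_add_one {i : ℕ → ℕ} {r : ℕ}
    (h_mono : MonotoneOn t (Set.Icc 1 M)) (h_letter : ∀ k ∈ Icc 1 M, i (t k) = k)
    (h_first : r < t 1 → i r ≠ 1)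
    (h_next : ∀ k, 2 ≤ k → k ≤ M → t (k - 1) < r → r < t k → i r ≠ k) (hr : i r ≤ M) :
    i r ≠ matchedLength t M r + 1 := by
  intro h_eq
  have lt_next : r < t (matchedLength t M r + 1) := by
    rw [← not_le, ← le_matchedLength_iff h_mono (mem_Icc.mpr ⟨by omega, by omega⟩)]
    omega
  rcases Nat.eq_zero_or_pos (matchedLength t M r) with length_eq | length_pos
  · rw [length_eq] at h_eq lt_next
    exact h_first lt_next h_eq
  · have length_mem : matchedLength t M r ∈ Icc 1 M := mem_Icc.mpr ⟨length_pos, matchedLength_le r⟩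
    have last_le : t (matchedLength t M r) ≤ r :=
      (le_matchedLength_iff h_mono length_mem r).mp le_rfl
    have last_ne : t (matchedLength t M r) ≠ r := fun last_eq => by
      have letter_last := h_letter _ length_mem
      rw [last_eq] at letter_last
      omega
    exact h_next _ (by omega) (by omega) (last_le.lt_of_ne last_ne) lt_next h_eq

end matchedLength

theorem thetaPair_sub_sum_indicator_mul_cartan {n N r p : ℕ} {i t : ℕ → ℕ} (hn : 3 ≤ n)
    (hp : p ∈ Icc 1 (n - 1)) (h_le : ∀ k ∈ Icc 1 (n - 1), t k ≤ N)
    (h_letter : ∀ k ∈ Icc 1 (n - 1), i (t k) = k) (h_mono : MonotoneOn t (Set.Icc 1 (n - 1))) :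
    thetaPair n p - ∑ j ∈ Icc (r + 1) N,
        (if j ∈ (Icc 1 (n - 1)).image t then 1 else 0) * cartan (i j) p =
      (if p = 1 then 1 else 0) + (if p = matchedLength t (n - 1) r then 1 else 0)
        - (if p = matchedLength t (n - 1) r + 1 then 1 else 0) := by
  have later_iff : ∀ k ∈ Icc 1 (n - 1), t k ∈ Icc (r + 1) N ↔ ¬ t k ≤ r := fun k hk => by
    simp only [mem_Icc, h_le k hk, and_true, Nat.succ_le_iff, not_le]
  calc _ = ∑ k ∈ Icc 1 (n - 1), cartan k p
          - ∑ k ∈ Icc 1 (n - 1) with ¬ t k ≤ r, cartan k p := by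
        rw [thetaPair_eq_sum_cartan hn hp,
          sum_indicator_image_mul _ h_letter fun k => cartan k p, filter_congr later_iff]
    _ = ∑ k ∈ Icc 1 (n - 1) with t k ≤ r, cartan k p :=
        sub_eq_of_eq_add (sum_filter_add_sum_filter_not _ _ _).symm
    _ = ∑ k ∈ Icc 1 (matchedLength t (n - 1) r), cartan k p := by
        rw [filter_Icc_le_eq_Icc_matchedLength h_mono]
    _ = _ := sum_Icc_cartan _ (mem_Icc.mp hp).1

theorem greedy_indicator_satisfies_string_inequalities_theta_one_general
    (n N : ℕ) (hn : 3 ≤ n) (i : ℕ → ℕ) (hi : ∀ t ∈ Icc 1 N, 1 ≤ i t ∧ i t ≤ n - 1)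
    (t : ℕ → ℕ)
    (ht_range : ∀ k ∈ Icc 1 (n - 1), t k ∈ Icc 1 N)
    (ht_letter : ∀ k ∈ Icc 1 (n - 1), i (t k) = k)
    (ht_mono : ∀ k, 1 ≤ k → k + 1 ≤ n - 1 → t k < t (k + 1))
    (ht_min1 : ∀ r ∈ Icc 1 N, r < t 1 → i r ≠ 1)
    (ht_min : ∀ k, 2 ≤ k → k ≤ n - 1 →
      ∀ r ∈ Icc 1 N, t (k - 1) < r → r < t k → i r ≠ k)
    (z : ℕ → ℤ)
    (hz : ∀ r, z r = if r ∈ (Icc 1 (n - 1)).image t then 1 else 0) :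
    ∀ r ∈ Icc 1 N,
      z r ≤ thetaPair n (i r) - ∑ j ∈ Icc (r + 1) N, z j * cartan (i j) (i r) := by
  intro r hr
  have letter_mem : i r ∈ Icc 1 (n - 1) := mem_Icc.mpr (hi r hr)
  have t_strictMonoOn : StrictMonoOn t (Set.Icc 1 (n - 1)) :=
    strictMonoOn_of_lt_add_one Set.ordConnected_Icc fun k _ hk hk_succ =>
      ht_mono k hk.1 hk_succ.2
  have letter_ne : i r ≠ matchedLength t (n - 1) r + 1 :=
    letter_ne_matchedLength_add_one t_strictMonoOn.monotoneOn ht_letter (ht_min1 r hr)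
      (fun k two_le k_le => ht_min k two_le k_le r hr) (mem_Icc.mp letter_mem).2
  have letter_eq (h_mem : r ∈ (Icc 1 (n - 1)).image t) : i r = matchedLength t (n - 1) r := by
    obtain ⟨k, hk, rfl⟩ := mem_image.mp h_mem
    rw [ht_letter k hk, matchedLength_apply t_strictMonoOn hk]
  simp only [hz]
  rw [thetaPair_sub_sum_indicator_mul_cartan hn letter_mem
    (fun k hk => (mem_Icc.mp (ht_range k hk)).2) ht_letter t_strictMonoOn.monotoneOn,
    if_neg letter_ne, sub_zero]
  by_cases h_mem : r ∈ (Icc 1 (n - 1)).image t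
  · rw [if_pos h_mem, if_pos (letter_eq h_mem)]
    split_ifs <;> omega
  · rw [if_neg h_mem]
    positivity

/-- for a reduced word `(i 1, …, i N)`, `N = n(n-1)/2`, of the longest
element `w₀` of `Sₙ` (`n ≥ 3`), the indicator vector `z` of the greedy indices
`t 1 < ⋯ < t (n-1)` for the pattern `(1, 2, …, n-1)` satisfies Littelmann's string
inequalities for the highest root `θ`:
`z r ≤ ⟨θ - Σ_{r < j ≤ N} z j • α_{i j}, α_{i r}^∨⟩` for every `1 ≤ r ≤ N`. -/
theorem greedy_indicator_satisfies_string_inequalities_theta_one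
    (n N : ℕ) (hn : 3 ≤ n) (hN : N = n * (n - 1) / 2)
    (i : ℕ → ℕ) (hi : ∀ t ∈ Finset.Icc 1 N, 1 ≤ i t ∧ i t ≤ n - 1)
    (hword : ∀ j ∈ Finset.Icc 1 n,
      (((List.range N).map fun t => adjSwap (i (t + 1))).prod : Equiv.Perm ℕ) j
        = n + 1 - j)
    (t : ℕ → ℕ)
    (ht_range : ∀ k ∈ Finset.Icc 1 (n - 1), t k ∈ Finset.Icc 1 N)
    (ht_letter : ∀ k ∈ Finset.Icc 1 (n - 1), i (t k) = k)
    (ht_mono : ∀ k, 1 ≤ k → k + 1 ≤ n - 1 → t k < t (k + 1))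
    (ht_min1 : ∀ r ∈ Finset.Icc 1 N, r < t 1 → i r ≠ 1)
    (ht_min : ∀ k, 2 ≤ k → k ≤ n - 1 →
      ∀ r ∈ Finset.Icc 1 N, t (k - 1) < r → r < t k → i r ≠ k)
    (z : ℕ → ℤ)
    (hz : ∀ r, z r = if r ∈ (Finset.Icc 1 (n - 1)).image t then 1 else 0) :
    ∀ r ∈ Finset.Icc 1 N,
      z r ≤ thetaPair n (i r) - ∑ j ∈ Finset.Icc (r + 1) N, z j * cartan (i j) (i r) :=
  greedy_indicator_satisfies_string_inequalities_theta_one_general n N hn i hi t ht_range ht_letter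
    ht_mono ht_min1 ht_min z hz
end

section
/- Let n ≥ 3 and let (i_1,…,i_N), N = n(n−1)/2, be a reduced word for the longest element w_0 of S_n, with greedy indices t_1 < ⋯ < t_{n−1} for the pattern (n−1, n−2, …, 1) (t_1 minimal with i_{t_1} = n−1; t_k minimal with t_k > t_{k−1} and i_{t_k} = n−k). Define z ∈ {0,1}^N by z_r = 1 if r ∈ {t_1,…,t_{n−1}} and z_r = 0 otherwise. Then z satisfies Littelmann's string inequalities for the highest root θ: for every 1 ≤ r ≤ N, z_r ≤ ⟨θ − Σ_{r<j≤N} z_j α_{i_j}, α^∨_{i_r}⟩. -/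
/-
The greedy indices read each simple root exactly once, so `Σ_j z_j α_{i_j} = θ`. The right-hand side
of the string inequality at `r` is therefore the pairing of the *earlier* roots
`Σ_{j ≤ r} z_j α_{i_j} = α_{n-K} + ⋯ + α_{n-1}` with `α_{i_r}^∨`, where `K` counts the greedy
indices up to `r`. If `r = t_K`, then `i_r = n-K` is the left end of this root and the pairing is at
least `1`. Otherwise the pairing has to be nonnegative; for `K ≥ 1` it is negative only when
`i_r = n-K-1`, but that is the letter the greedy choice looks for after `t_K`, so `r` would have
been `t_{K+1}`.
-/

theorem sum_Ico_cartan {a b : ℕ} (hab : a < b) (p : ℕ) :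
    ∑ q ∈ Finset.Ico a b, cartan q p =
      (if p = a then 1 else 0) + (if p + 1 = b then 1 else 0)
        - (if p + 1 = a then 1 else 0) - (if p = b then 1 else 0) := by
  induction b, hab using Nat.le_induction with
  | base =>
    rw [Nat.succ_eq_add_one, Nat.Ico_succ_singleton, Finset.sum_singleton, cartan]
    split_ifs <;> omega
  | succ b hab ih =>
    rw [Finset.sum_Ico_succ_top (by omega), ih, cartan]
    split_ifs <;> omega

theorem sum_Ico_cartan_eq_thetaPair {n p : ℕ} (hn : 3 ≤ n) (hp : 1 ≤ p) (hp' : p ≤ n - 1) :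
    ∑ q ∈ Finset.Ico 1 n, cartan q p = thetaPair n p := by
  rw [sum_Ico_cartan (by omega), thetaPair]
  split_ifs <;> omega

theorem sum_Ico_cartan_nonneg {a b p : ℕ} (hab : a < b) (hpa : p + 1 ≠ a) (hpb : p ≠ b) :
    0 ≤ ∑ q ∈ Finset.Ico a b, cartan q p := by
  rw [sum_Ico_cartan hab]
  split_ifs <;> omega

theorem one_le_sum_Ico_cartan_left {a b : ℕ} (hab : a < b) :
    1 ≤ ∑ q ∈ Finset.Ico a b, cartan q a := by
  rw [sum_Ico_cartan hab]
  split_ifs <;> omega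

theorem exists_filter_Icc_one_le_eq_Icc {α : Type*} [Preorder α] [DecidableLE α]
    {t : ℕ → α} {m : ℕ} (ht : MonotoneOn t (Set.Icc 1 m)) (x : α) :
    ∃ K ≤ m, {k ∈ Finset.Icc 1 m | t k ≤ x} = Finset.Icc 1 K := by
  set K := Nat.findGreatest (fun k => t k ≤ x) m with hK
  have hKm : K ≤ m := Nat.findGreatest_le m
  refine ⟨K, hKm, Finset.ext fun k => ?_⟩
  rw [Finset.mem_filter, Finset.mem_Icc, Finset.mem_Icc]
  constructor
  · rintro ⟨⟨hk, hkm⟩, hkx⟩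
    exact ⟨hk, Nat.le_findGreatest hkm hkx⟩
  · rintro ⟨hk, hkK⟩
    have hKx : t K ≤ x := Nat.findGreatest_of_ne_zero hK.symm (by omega)
    exact ⟨⟨hk, hkK.trans hKm⟩,
      (ht ⟨hk, hkK.trans hKm⟩ ⟨hk.trans hkK, hKm⟩ hkK).trans hKx⟩

theorem filter_Icc_one_le_apply_eq_Icc {α : Type*} [Preorder α] [DecidableLE α]
    {t : ℕ → α} {m k : ℕ} (ht : StrictMonoOn t (Set.Icc 1 m)) (hk : k ∈ Finset.Icc 1 m) :
    {l ∈ Finset.Icc 1 m | t l ≤ t k} = Finset.Icc 1 k := by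
  ext l
  rw [Finset.mem_filter, Finset.mem_Icc, Finset.mem_Icc]
  rw [Finset.mem_Icc] at hk
  constructor
  · rintro ⟨hl, hle⟩
    exact ⟨hl.1, (ht.le_iff_le hl hk).1 hle⟩
  · rintro ⟨hl, hlk⟩
    have hlm : l ∈ Set.Icc 1 m := ⟨hl, hlk.trans hk.2⟩
    exact ⟨hlm, (ht.le_iff_le hlm hk).2 hlk⟩

theorem sum_ite_mem_image_mul {ι κ R : Type*} [DecidableEq κ] [NonAssocSemiring R]
    {t : ι → κ} {A : Finset ι} (ht : Set.InjOn t A) (S : Finset κ) (f : κ → R) :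
    ∑ j ∈ S, (if j ∈ A.image t then 1 else 0) * f j = ∑ k ∈ A with t k ∈ S, f (t k) := by
  have himage : {j ∈ S | j ∈ A.image t} = {k ∈ A | t k ∈ S}.image t := by
    rw [Finset.filter_mem_eq_inter, Finset.inter_comm, ← Finset.filter_mem_eq_inter,
      Finset.filter_image]
  simp only [ite_mul, one_mul, zero_mul]
  rw [← Finset.sum_filter, himage, Finset.sum_image (ht.mono (Finset.filter_subset _ _))]

/-- Positions `t 1 < ⋯ < t (n-1)` at which the word `i 1, …, i N` reads `n-1, n-2, …, 1`, each
`t k` with `k ≥ 2` being the first occurrence of its letter after `t (k-1)`. The position `t 1` may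
be any occurrence of `n-1`, so the indices greedy from the start of the word are a special case. -/
structure IsGreedySubword (n N : ℕ) (i t : ℕ → ℕ) : Prop where
  mem_Icc : ∀ k ∈ Finset.Icc 1 (n - 1), t k ∈ Finset.Icc 1 N
  letter : ∀ k ∈ Finset.Icc 1 (n - 1), i (t k) = n - k
  lt_succ : ∀ k, 1 ≤ k → k + 1 ≤ n - 1 → t k < t (k + 1)
  letter_ne : ∀ k, 2 ≤ k → k ≤ n - 1 →
    ∀ r ∈ Finset.Icc 1 N, t (k - 1) < r → r < t k → i r ≠ n - k

namespace IsGreedySubword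

variable {n N : ℕ} {i t : ℕ → ℕ} {z : ℕ → ℤ}

theorem strictMonoOn (ht : IsGreedySubword n N i t) : StrictMonoOn t (Set.Icc 1 (n - 1)) :=
  strictMonoOn_of_lt_add_one Set.ordConnected_Icc fun k _ hk hk' => ht.lt_succ k hk.1 hk'.2

theorem sum_letters_eq_sum_Ico (ht : IsGreedySubword n N i t) {M : Type*} [AddCommMonoid M]
    {K : ℕ} (hK : K ≤ n - 1) (f : ℕ → M) :
    ∑ k ∈ Finset.Icc 1 K, f (i (t k)) = ∑ q ∈ Finset.Ico (n - K) n, f q := by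
  calc ∑ k ∈ Finset.Icc 1 K, f (i (t k))
      = ∑ k ∈ Finset.Ico 1 (K + 1), f (n - k) :=
        Finset.sum_congr (Finset.Ico_add_one_right_eq_Icc 1 K).symm fun k hk => by
          rw [ht.letter k (Finset.Icc_subset_Icc_right hK hk)]
    _ = ∑ q ∈ Finset.Ico (n - K) n, f q := by
        rw [Finset.sum_Ico_reflect f 1 (by omega), Nat.add_sub_add_right, Nat.add_sub_cancel]

theorem sum_Icc_mul_letter (ht : IsGreedySubword n N i t)
    (hz : ∀ r, z r = if r ∈ (Finset.Icc 1 (n - 1)).image t then 1 else 0)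
    {r K : ℕ} (hKn : K ≤ n - 1) (hK : {k ∈ Finset.Icc 1 (n - 1) | t k ≤ r} = Finset.Icc 1 K)
    (f : ℕ → ℤ) :
    ∑ j ∈ Finset.Icc 1 r, z j * f (i j) = ∑ q ∈ Finset.Ico (n - K) n, f q := by
  have hinj : Set.InjOn t (Finset.Icc 1 (n - 1)) := by
    rw [Finset.coe_Icc]
    exact ht.strictMonoOn.injOn
  have hprefix : {k ∈ Finset.Icc 1 (n - 1) | t k ∈ Finset.Icc 1 r} = Finset.Icc 1 K := by
    rw [← hK]
    refine Finset.filter_congr fun k hk => ?_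
    rw [Finset.mem_Icc, and_iff_right (Finset.mem_Icc.1 (ht.mem_Icc k hk)).1]
  simp only [hz]
  rw [sum_ite_mem_image_mul hinj _ fun j => f (i j), hprefix, ht.sum_letters_eq_sum_Ico hKn]

theorem sum_word_cartan_eq_thetaPair (ht : IsGreedySubword n N i t) (hn : 3 ≤ n)
    (hz : ∀ r, z r = if r ∈ (Finset.Icc 1 (n - 1)).image t then 1 else 0)
    {p : ℕ} (hp : 1 ≤ p) (hp' : p ≤ n - 1) :
    ∑ j ∈ Finset.Icc 1 N, z j * cartan (i j) p = thetaPair n p := by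
  have hall : {k ∈ Finset.Icc 1 (n - 1) | t k ≤ N} = Finset.Icc 1 (n - 1) :=
    Finset.filter_true_of_mem fun k hk => (Finset.mem_Icc.1 (ht.mem_Icc k hk)).2
  rw [ht.sum_Icc_mul_letter hz le_rfl hall fun q => cartan q p, Nat.sub_sub_self (by omega),
    sum_Ico_cartan_eq_thetaPair hn hp hp']

theorem thetaPair_sub_sum_suffix (ht : IsGreedySubword n N i t) (hn : 3 ≤ n)
    (hz : ∀ r, z r = if r ∈ (Finset.Icc 1 (n - 1)).image t then 1 else 0)
    {p r : ℕ} (hp : 1 ≤ p) (hp' : p ≤ n - 1) (hr : r ≤ N) :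
    thetaPair n p - ∑ j ∈ Finset.Icc (r + 1) N, z j * cartan (i j) p =
      ∑ j ∈ Finset.Icc 1 r, z j * cartan (i j) p := by
  rw [← ht.sum_word_cartan_eq_thetaPair hn hz hp hp', sub_eq_iff_eq_add]
  simp only [← Finset.Ico_add_one_right_eq_Icc]
  exact (Finset.sum_Ico_consecutive _ (by omega) (by omega)).symm

theorem letter_add_one_ne (ht : IsGreedySubword n N i t) {r K : ℕ}
    (hr : r ∈ Finset.Icc 1 N) (hrt : r ∉ (Finset.Icc 1 (n - 1)).image t) (hir : 1 ≤ i r)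
    (hK : {k ∈ Finset.Icc 1 (n - 1) | t k ≤ r} = Finset.Icc 1 K) (hK₁ : 1 ≤ K) :
    i r + 1 ≠ n - K := by
  intro hletter
  obtain ⟨hKmem, hKr⟩ : K ∈ Finset.Icc 1 (n - 1) ∧ t K ≤ r :=
    Finset.mem_filter.1 (hK.symm.subset (Finset.right_mem_Icc.2 hK₁))
  have hlt : t K < r := hKr.lt_of_ne fun h => hrt (h ▸ Finset.mem_image_of_mem t hKmem)
  have hgt : r < t (K + 1) := by
    by_contra! hle
    have hmem : K + 1 ∈ {k ∈ Finset.Icc 1 (n - 1) | t k ≤ r} :=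
      Finset.mem_filter.2 ⟨Finset.mem_Icc.2 (by omega), hle⟩
    rw [hK, Finset.mem_Icc] at hmem
    omega
  exact ht.letter_ne (K + 1) (by omega) (by omega) r hr hlt hgt (by omega)

end IsGreedySubword

theorem greedy_indicator_satisfies_string_inequalities_theta_n_general {n N : ℕ} (hn : 3 ≤ n)
    {i t : ℕ → ℕ} (hi : ∀ r ∈ Finset.Icc 1 N, 1 ≤ i r ∧ i r ≤ n - 1)
    (ht : IsGreedySubword n N i t)
    {z : ℕ → ℤ} (hz : ∀ r, z r = if r ∈ (Finset.Icc 1 (n - 1)).image t then 1 else 0) :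
    ∀ r ∈ Finset.Icc 1 N,
      z r ≤ thetaPair n (i r) - ∑ j ∈ Finset.Icc (r + 1) N, z j * cartan (i j) (i r) := by
  intro r hr
  obtain ⟨hir, hir'⟩ := hi r hr
  rw [ht.thetaPair_sub_sum_suffix hn hz hir hir' (Finset.mem_Icc.1 hr).2, hz]
  by_cases hrt : r ∈ (Finset.Icc 1 (n - 1)).image t
  · obtain ⟨k, hk, rfl⟩ := Finset.mem_image.1 hrt
    obtain ⟨hk₁, hkn⟩ := Finset.mem_Icc.1 hk
    rw [if_pos hrt, ht.sum_Icc_mul_letter hz hkn (filter_Icc_one_le_apply_eq_Icc ht.strictMonoOn hk)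
      fun q => cartan q (i (t k)), ht.letter k hk]
    exact one_le_sum_Ico_cartan_left (by omega)
  · obtain ⟨K, hKn, hK⟩ := exists_filter_Icc_one_le_eq_Icc ht.strictMonoOn.monotoneOn r
    rw [if_neg hrt, ht.sum_Icc_mul_letter hz hKn hK fun q => cartan q (i r)]
    rcases K.eq_zero_or_pos with rfl | hK₁
    · rw [Nat.sub_zero, Finset.Ico_self, Finset.sum_empty]
    · exact sum_Ico_cartan_nonneg (by omega) (ht.letter_add_one_ne hr hrt hir hK hK₁) (by omega)

/-- for a reduced word `(i 1, …, i N)`, `N = n(n-1)/2`, of the longest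
element `w₀` of `Sₙ` (`n ≥ 3`), the indicator vector `z` of the greedy indices
`t 1 < ⋯ < t (n-1)` for the pattern `(n-1, n-2, …, 1)` satisfies Littelmann's string
inequalities for the highest root `θ`:
`z r ≤ ⟨θ - Σ_{r < j ≤ N} z j • α_{i j}, α_{i r}^∨⟩` for every `1 ≤ r ≤ N`. -/
theorem greedy_indicator_satisfies_string_inequalities_theta_n
    (n N : ℕ) (hn : 3 ≤ n) (hN : N = n * (n - 1) / 2)
    (i : ℕ → ℕ) (hi : ∀ t ∈ Finset.Icc 1 N, 1 ≤ i t ∧ i t ≤ n - 1)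
    (hword : ∀ j ∈ Finset.Icc 1 n,
      (((List.range N).map fun t => adjSwap (i (t + 1))).prod : Equiv.Perm ℕ) j
        = n + 1 - j)
    (t : ℕ → ℕ)
    (ht_range : ∀ k ∈ Finset.Icc 1 (n - 1), t k ∈ Finset.Icc 1 N)
    (ht_letter : ∀ k ∈ Finset.Icc 1 (n - 1), i (t k) = n - k)
    (ht_mono : ∀ k, 1 ≤ k → k + 1 ≤ n - 1 → t k < t (k + 1))
    (ht_min1 : ∀ r ∈ Finset.Icc 1 N, r < t 1 → i r ≠ n - 1)
    (ht_min : ∀ k, 2 ≤ k → k ≤ n - 1 →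
      ∀ r ∈ Finset.Icc 1 N, t (k - 1) < r → r < t k → i r ≠ n - k)
    (z : ℕ → ℤ)
    (hz : ∀ r, z r = if r ∈ (Finset.Icc 1 (n - 1)).image t then 1 else 0) :
    ∀ r ∈ Finset.Icc 1 N,
      z r ≤ thetaPair n (i r) - ∑ j ∈ Finset.Icc (r + 1) N, z j * cartan (i j) (i r) :=
  greedy_indicator_satisfies_string_inequalities_theta_n_general hn hi
    ⟨ht_range, ht_letter, ht_mono, ht_min⟩ hz
end

section
/- Let n ≥ 3 and let (i_1,…,i_N), N = n(n−1)/2, be a reduced word for the longest element w_0 of S_n, with greedy indices t_1 < ⋯ < t_{n−1} for the pattern (1,2,…,n−1), and let z ∈ {0,1}^N be the corresponding indicator vector (z_r = 1 iff r ∈ {t_1,…,t_{n−1}}). Let λ = Σ_{a=1}^{n−1} λ_a ω_a be a dominant integral weight (all λ_a ∈ ℤ_{≥0}). If a ∈ ℤ_{≥0}^N satisfies Littelmann's string inequalities for λ, i.e. a_r ≤ ⟨λ − Σ_{r<j≤N} a_j α_{i_j}, α^∨_{i_r}⟩ for all 1 ≤ r ≤ N, then a + z ∈ ℤ_{≥0}^N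 satisfies Littelmann's string inequalities for λ + θ, i.e. a_r + z_r ≤ ⟨λ + θ − Σ_{r<j≤N} (a_j + z_j) α_{i_j}, α^∨_{i_r}⟩ for all 1 ≤ r ≤ N. (This is the Littelmann-inequality part of the embedding ψ^n_1 : S_i(λ) → S_i(λ+θ) of lattice points of string polytopes given by x ↦ x + z_1.) -/
/-!
Littelmann's inequalities are additive in the pair (weight, exponent vector), and they only weaken
as the weight grows, so everything reduces to showing that `z` satisfies them for `ω_{n-1}`, which
is dominated by `θ = ω_1 + ω_{n-1}`. The letters `k` with `r < t_k` form a final segment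
`{q, …, n-1}`, so the sum in the `r`-th inequality for `z` is the pairing of `α_q + ⋯ + α_{n-1}`
with `α_p^∨`, where `p = i_r`. This pairing could be too large only for `p = q`, and greediness
excludes that case: a letter `q` at a position `r < t_q` occurs before `t_{q-1}`. The entry
`z_r = 1` occurs only for `p = q - 1`, where the pairing `-1` cancels it unless `p = n - 1`.
-/

/-- The pairings `p ↦ ⟨ω_m, α_p^∨⟩` of the fundamental weight `ω_m` with the simple coroots. A
weight is encoded throughout by its pairings with the simple coroots. -/
def fundamentalWeight (m p : ℕ) : ℤ := if p = m then 1 else 0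

/-- The lattice points of `ℤ_{≥0}^N` satisfying Littelmann's string inequalities for the word
`(i 1, …, i N)` and the weight `lam`. The inequalities of the string cone are not included, and the
entries of `a` outside `1, …, N` are irrelevant. -/
structure IsLittelmannPoint (N : ℕ) (i : ℕ → ℕ) (lam a : ℕ → ℤ) : Prop where
  nonneg : ∀ r ∈ Finset.Icc 1 N, 0 ≤ a r
  le_pairing : ∀ r ∈ Finset.Icc 1 N,
    a r ≤ lam (i r) - ∑ j ∈ Finset.Icc (r + 1) N, a j * cartan (i j) (i r)

/-- The positions `t 1 < ⋯ < t m` are the greedy indices for the pattern `(1, 2, …, m)` in the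
word `(i 1, …, i N)`: each `t k` is the first position after `t (k - 1)` carrying the letter `k`.
The value `t 0` is irrelevant, so the minimality of `t 1` is a separate field. -/
structure IsGreedyOccurrence_s8 (m N : ℕ) (i t : ℕ → ℕ) : Prop where
  mem_Icc : ∀ k ∈ Finset.Icc 1 m, t k ∈ Finset.Icc 1 N
  letter : ∀ k ∈ Finset.Icc 1 m, i (t k) = k
  lt_succ : ∀ k, 1 ≤ k → k + 1 ≤ m → t k < t (k + 1)
  ne_one : ∀ r ∈ Finset.Icc 1 N, r < t 1 → i r ≠ 1
  ne_succ : ∀ k, 1 ≤ k → k + 1 ≤ m →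
    ∀ r ∈ Finset.Icc 1 N, t k < r → r < t (k + 1) → i r ≠ k + 1

/-- The indicator vector of the positions `t 1, …, t m`. -/
def positionIndicator (m : ℕ) (t : ℕ → ℕ) (r : ℕ) : ℤ :=
  if r ∈ (Finset.Icc 1 m).image t then 1 else 0

/-- The letters of the pattern `(1, 2, …, m)` that are matched after position `r`. -/
def lettersAfter (m : ℕ) (t : ℕ → ℕ) (r : ℕ) : Finset ℕ :=
  {k ∈ Finset.Icc 1 m | r < t k}

theorem fundamentalWeight_nonneg (m p : ℕ) : 0 ≤ fundamentalWeight m p := by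
  unfold fundamentalWeight
  positivity

theorem fundamentalWeight_le_thetaPair (n : ℕ) : fundamentalWeight (n - 1) ≤ thetaPair n := by
  intro p
  unfold fundamentalWeight thetaPair
  split_ifs <;> simp_all

theorem cartan_eq_ite_sub (k p : ℕ) :
    cartan k p =
      2 * (if k = p then 1 else 0) - (if k = p + 1 then 1 else 0) - if k + 1 = p then 1 else 0 := by
  unfold cartan
  split_ifs <;> omega

theorem sum_cartan (s : Finset ℕ) (p : ℕ) :
    ∑ k ∈ s, cartan k p =
      2 * (if p ∈ s then 1 else 0) - (if p + 1 ∈ s then 1 else 0)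
        - if p ∈ s.image Nat.succ then 1 else 0 := by
  have sum_pred : ∑ k ∈ s, (if k + 1 = p then (1 : ℤ) else 0) =
      if p ∈ s.image Nat.succ then 1 else 0 := by
    rw [← Finset.sum_ite_eq' (s.image Nat.succ) p fun _ => (1 : ℤ),
      Finset.sum_image Nat.succ_injective.injOn]
  simp only [cartan_eq_ite_sub, Finset.sum_sub_distrib, ← Finset.mul_sum, Finset.sum_ite_eq',
    sum_pred]

namespace IsLittelmannPoint

variable {N : ℕ} {i : ℕ → ℕ} {lam mu a b : ℕ → ℤ}

theorem add (ha : IsLittelmannPoint N i lam a) (hb : IsLittelmannPoint N i mu b) :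
    IsLittelmannPoint N i (lam + mu) (a + b) where
  nonneg r hr := add_nonneg (ha.nonneg r hr) (hb.nonneg r hr)
  le_pairing r hr := by
    simp only [Pi.add_apply, add_mul, Finset.sum_add_distrib]
    linarith [ha.le_pairing r hr, hb.le_pairing r hr]

theorem mono (ha : IsLittelmannPoint N i lam a) (h : lam ≤ mu) : IsLittelmannPoint N i mu a where
  nonneg := ha.nonneg
  le_pairing r hr := (ha.le_pairing r hr).trans (sub_le_sub_right (h (i r)) _)

end IsLittelmannPoint

theorem positionIndicator_nonneg (m : ℕ) (t : ℕ → ℕ) (r : ℕ) : 0 ≤ positionIndicator m t r := by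
  unfold positionIndicator
  positivity

theorem mem_lettersAfter {m : ℕ} {t : ℕ → ℕ} {r k : ℕ} :
    k ∈ lettersAfter m t r ↔ k ∈ Finset.Icc 1 m ∧ r < t k :=
  Finset.mem_filter

namespace IsGreedyOccurrence_s8

variable {m N : ℕ} {i t : ℕ → ℕ}

theorem injOn (ht : IsGreedyOccurrence_s8 m N i t) : Set.InjOn t (Finset.Icc 1 m) :=
  Set.LeftInvOn.injOn ht.letter

theorem filter_mem_image_eq_image_lettersAfter (ht : IsGreedyOccurrence_s8 m N i t) (r : ℕ) :
    {j ∈ Finset.Icc (r + 1) N | j ∈ (Finset.Icc 1 m).image t} = (lettersAfter m t r).image t := by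
  ext j
  simp only [Finset.mem_filter, Finset.mem_image, mem_lettersAfter]
  constructor
  · rintro ⟨hj, k, hk, rfl⟩
    exact ⟨k, ⟨hk, (Finset.mem_Icc.1 hj).1⟩, rfl⟩
  · rintro ⟨k, ⟨hk, hrk⟩, rfl⟩
    exact ⟨Finset.mem_Icc.2 ⟨hrk, (Finset.mem_Icc.1 (ht.mem_Icc k hk)).2⟩, k, hk, rfl⟩

theorem sum_positionIndicator_mul (ht : IsGreedyOccurrence_s8 m N i t) (r : ℕ) (f : ℕ → ℤ) :
    ∑ j ∈ Finset.Icc (r + 1) N, positionIndicator m t j * f (i j) =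
      ∑ k ∈ lettersAfter m t r, f k := by
  calc ∑ j ∈ Finset.Icc (r + 1) N, positionIndicator m t j * f (i j)
      = ∑ j ∈ Finset.Icc (r + 1) N with j ∈ (Finset.Icc 1 m).image t, f (i j) := by
        simp only [positionIndicator, ite_mul, one_mul, zero_mul, Finset.sum_filter]
    _ = ∑ k ∈ lettersAfter m t r, f (i (t k)) := by
        rw [ht.filter_mem_image_eq_image_lettersAfter,
          Finset.sum_image (ht.injOn.mono fun k hk => (mem_lettersAfter.1 hk).1)]
    _ = ∑ k ∈ lettersAfter m t r, f k :=
        Finset.sum_congr rfl fun k hk => by rw [ht.letter k (mem_lettersAfter.1 hk).1]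

theorem succ_mem_lettersAfter (ht : IsGreedyOccurrence_s8 m N i t) {r k : ℕ}
    (hk : k ∈ Finset.Icc 1 m) (hkm : k ≠ m) (hr : r ≤ t k) : k + 1 ∈ lettersAfter m t r := by
  obtain ⟨one_le, le_m⟩ := Finset.mem_Icc.1 hk
  have succ_le : k + 1 ≤ m := by omega
  exact mem_lettersAfter.2
    ⟨Finset.mem_Icc.2 ⟨by omega, succ_le⟩, hr.trans_lt (ht.lt_succ k one_le succ_le)⟩

theorem one_sub_ite_succ_mem_le_fundamentalWeight (ht : IsGreedyOccurrence_s8 m N i t) {r k : ℕ}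
    (hk : k ∈ Finset.Icc 1 m) (hr : r ≤ t k) :
    1 - (if k + 1 ∈ lettersAfter m t r then 1 else 0) ≤ fundamentalWeight m k := by
  unfold fundamentalWeight
  by_cases hkm : k = m
  · rw [if_pos hkm]
    split_ifs <;> omega
  · rw [if_neg hkm, if_pos (ht.succ_mem_lettersAfter hk hkm hr), sub_self]

theorem letter_mem_image_succ_lettersAfter (ht : IsGreedyOccurrence_s8 m N i t) {r : ℕ}
    (hr : r ∈ Finset.Icc 1 N) (hir : i r ∈ lettersAfter m t r) :
    i r ∈ (lettersAfter m t r).image Nat.succ := by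
  obtain ⟨hp, r_lt⟩ := mem_lettersAfter.1 hir
  obtain ⟨one_le, le_m⟩ := Finset.mem_Icc.1 hp
  have ne_one : i r ≠ 1 := fun h => ht.ne_one r hr (h ▸ r_lt) h
  obtain ⟨k, hk⟩ : ∃ k, i r = k + 1 := ⟨i r - 1, by omega⟩
  have hk_mem : k ∈ Finset.Icc 1 m := Finset.mem_Icc.2 ⟨by omega, by omega⟩
  have r_le : r ≤ t k := by
    by_contra! h
    exact ht.ne_succ k (by omega) (by omega) r hr h (hk ▸ r_lt) hk
  have r_ne : r ≠ t k := by
    rintro rfl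
    have := ht.letter k hk_mem
    omega
  exact Finset.mem_image.2 ⟨k, mem_lettersAfter.2 ⟨hk_mem, by omega⟩, hk.symm⟩

theorem positionIndicator_add_sum_cartan_le (ht : IsGreedyOccurrence_s8 m N i t) {r : ℕ}
    (hr : r ∈ Finset.Icc 1 N) :
    positionIndicator m t r + ∑ k ∈ lettersAfter m t r, cartan k (i r) ≤
      fundamentalWeight m (i r) := by
  have weight_nonneg := fundamentalWeight_nonneg m (i r)
  rw [sum_cartan]
  unfold positionIndicator
  by_cases matched : r ∈ (Finset.Icc 1 m).image t
  · obtain ⟨hp, r_eq⟩ : i r ∈ Finset.Icc 1 m ∧ t (i r) = r := by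
      obtain ⟨k, hk, rfl⟩ := Finset.mem_image.1 matched
      rw [ht.letter k hk]
      exact ⟨hk, rfl⟩
    have not_after : i r ∉ lettersAfter m t r := fun h => (mem_lettersAfter.1 h).2.ne' r_eq
    have bound := ht.one_sub_ite_succ_mem_le_fundamentalWeight hp r_eq.ge
    rw [if_pos matched, if_neg not_after]
    split_ifs at bound ⊢ <;> omega
  · rw [if_neg matched]
    by_cases after : i r ∈ lettersAfter m t r
    · obtain ⟨hp, r_lt⟩ := mem_lettersAfter.1 after
      have bound := ht.one_sub_ite_succ_mem_le_fundamentalWeight hp r_lt.le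
      rw [if_pos after, if_pos (ht.letter_mem_image_succ_lettersAfter hr after)]
      omega
    · rw [if_neg after]
      split_ifs <;> omega

theorem isLittelmannPoint_positionIndicator (ht : IsGreedyOccurrence_s8 m N i t) :
    IsLittelmannPoint N i (fundamentalWeight m) (positionIndicator m t) where
  nonneg r _ := positionIndicator_nonneg m t r
  le_pairing r hr := by
    rw [ht.sum_positionIndicator_mul r fun k => cartan k (i r)]
    exact le_sub_iff_add_le.2 (ht.positionIndicator_add_sum_cartan_le hr)

end IsGreedyOccurrence_s8

theorem add_z_one_preserves_string_inequalities_general {m N : ℕ} {i t : ℕ → ℕ} {lam a : ℕ → ℤ}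
    (ht : IsGreedyOccurrence_s8 m N i t) (ha : IsLittelmannPoint N i lam a) :
    IsLittelmannPoint N i (lam + fundamentalWeight m) (a + positionIndicator m t) :=
  ha.add ht.isLittelmannPoint_positionIndicator

/-- for a reduced word `(i 1, …, i N)`, `N = n(n-1)/2`, of the longest
element `w₀` of `Sₙ` (`n ≥ 3`), let `z` be the indicator vector of the greedy indices
for the pattern `(1, 2, …, n-1)`, and let `λ = Σ lam a • ω_a` be a dominant integral
weight (so `⟨λ, α_p^∨⟩ = lam p`).  If `a ∈ ℤ_{≥0}^N` satisfies Littelmann's string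
inequalities for `λ`, then `a + z ∈ ℤ_{≥0}^N` satisfies them for `λ + θ`.
This is the Littelmann-inequality part of the embedding `ψ¹ₙ : S_i(λ) → S_i(λ+θ)`,
`x ↦ x + z₁`. -/
theorem add_z_one_preserves_string_inequalities
    (n N : ℕ) (hn : 3 ≤ n) (hN : N = n * (n - 1) / 2)
    (i : ℕ → ℕ) (hi : ∀ t ∈ Finset.Icc 1 N, 1 ≤ i t ∧ i t ≤ n - 1)
    (hword : ∀ j ∈ Finset.Icc 1 n,
      (((List.range N).map fun t => adjSwap (i (t + 1))).prod : Equiv.Perm ℕ) j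
        = n + 1 - j)
    (t : ℕ → ℕ)
    (ht_range : ∀ k ∈ Finset.Icc 1 (n - 1), t k ∈ Finset.Icc 1 N)
    (ht_letter : ∀ k ∈ Finset.Icc 1 (n - 1), i (t k) = k)
    (ht_mono : ∀ k, 1 ≤ k → k + 1 ≤ n - 1 → t k < t (k + 1))
    (ht_min1 : ∀ r ∈ Finset.Icc 1 N, r < t 1 → i r ≠ 1)
    (ht_min : ∀ k, 2 ≤ k → k ≤ n - 1 →
      ∀ r ∈ Finset.Icc 1 N, t (k - 1) < r → r < t k → i r ≠ k)
    (z : ℕ → ℤ)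
    (hz : ∀ r, z r = if r ∈ (Finset.Icc 1 (n - 1)).image t then 1 else 0)
    (lam : ℕ → ℤ) (hlam : ∀ p ∈ Finset.Icc 1 (n - 1), 0 ≤ lam p)
    (a : ℕ → ℤ) (ha_nonneg : ∀ r ∈ Finset.Icc 1 N, 0 ≤ a r)
    (ha_string : ∀ r ∈ Finset.Icc 1 N,
      a r ≤ lam (i r) - ∑ j ∈ Finset.Icc (r + 1) N, a j * cartan (i j) (i r)) :
    (∀ r ∈ Finset.Icc 1 N, 0 ≤ a r + z r) ∧
    (∀ r ∈ Finset.Icc 1 N,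
      a r + z r ≤ (lam (i r) + thetaPair n (i r))
        - ∑ j ∈ Finset.Icc (r + 1) N, (a j + z j) * cartan (i j) (i r)) := by
  have ht : IsGreedyOccurrence_s8 (n - 1) N i t :=
    ⟨ht_range, ht_letter, ht_mono, ht_min1, fun k hk => ht_min (k + 1) (by omega)⟩
  obtain rfl : z = positionIndicator (n - 1) t := funext hz
  have h := (add_z_one_preserves_string_inequalities_general ht ⟨ha_nonneg, ha_string⟩).mono
    (add_le_add_right (fundamentalWeight_le_thetaPair n) lam)
  exact ⟨h.nonneg, h.le_pairing⟩
end

section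
/- Let λ_1, λ_2 ≥ 1 be integers and let x = (x_1,x_2,x_3) ∈ P(λ_1, λ_2). Then x does NOT lie in the image ψ(P(λ_1 − 1, λ_2 − 1)) if and only if x_3 = 0 or x_2 − x_3 = λ_1. Consequently A(λ_1,λ_2) := P(λ_1,λ_2) \ ψ(P(λ_1 − 1, λ_2 − 1)) = {x ∈ P(λ_1,λ_2) : x_3 = 0} ∪ {x ∈ P(λ_1,λ_2) : x_2 − x_3 = λ_1}. -/
/-- The set of lattice points of the string polytope `S_{(2,1,2)}(a ω₁ + b ω₂)` for
`sl₃` and the reduced word `(2,1,2)`: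
`P(a,b) = {(x₁,x₂,x₃) ∈ ℤ³ : 0 ≤ x₁, 0 ≤ x₃ ≤ b, x₃ ≤ x₂ ≤ a + x₃, x₁ ≤ b - 2x₃ + x₂}`. -/
def stringPts (a b : ℤ) : Set (ℤ × ℤ × ℤ) :=
  {x | 0 ≤ x.1 ∧ 0 ≤ x.2.2 ∧ x.2.2 ≤ b ∧ x.2.2 ≤ x.2.1 ∧ x.2.1 ≤ a + x.2.2 ∧
       x.1 ≤ b - 2 * x.2.2 + x.2.1}

/-- Addition of the string coordinates `(0,1,1)` of the weight-zero element `z₂` of the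
adjoint crystal `B(θ)` of `sl₃`: `ψ(x₁,x₂,x₃) = (x₁, x₂+1, x₃+1)`. -/
def psiMap (x : ℤ × ℤ × ℤ) : ℤ × ℤ × ℤ := (x.1, x.2.1 + 1, x.2.2 + 1)

/-! Since `ψ` is translation by `(0,1,1)`, its image of `P(a-1,b-1)` is again cut out by
inequalities. After the shift, `0 ≤ x₁`, `x₃ ≤ b`, `x₃ ≤ x₂` and `x₁ ≤ b - 2x₃ + x₂` come out
unchanged; only `0 ≤ x₃` and `x₂ - x₃ ≤ a` become strict. A point of `P(a,b)` is therefore missed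
exactly when one of these two is an equality. -/

theorem psiMap_eq_add (x : ℤ × ℤ × ℤ) : psiMap x = x + (0, 1, 1) := by
  simp [psiMap, Prod.ext_iff]

theorem mem_psiMap_image_iff {S : Set (ℤ × ℤ × ℤ)} {x : ℤ × ℤ × ℤ} :
    x ∈ psiMap '' S ↔ (x.1, x.2.1 - 1, x.2.2 - 1) ∈ S := by
  have hsub : x + -(0, 1, 1) = (x.1, x.2.1 - 1, x.2.2 - 1) := by
    simp [Prod.ext_iff, sub_eq_add_neg]
  rw [funext psiMap_eq_add, Set.image_add_right, Set.mem_preimage, hsub]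

theorem psiMap_image_stringPts (a b : ℤ) :
    psiMap '' stringPts (a - 1) (b - 1) =
      {x ∈ stringPts a b | 0 < x.2.2 ∧ x.2.1 - x.2.2 < a} := by
  ext x
  simp only [mem_psiMap_image_iff, stringPts, Set.mem_ofPred_eq]
  omega

theorem notMem_psiMap_image_stringPts_iff {a b : ℤ} {x : ℤ × ℤ × ℤ} (hx : x ∈ stringPts a b) :
    x ∉ psiMap '' stringPts (a - 1) (b - 1) ↔ x.2.2 = 0 ∨ x.2.1 - x.2.2 = a := by
  have h_nonneg : 0 ≤ x.2.2 := hx.2.1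
  have h_le : x.2.1 - x.2.2 ≤ a := sub_le_iff_le_add.2 hx.2.2.2.2.1
  calc x ∉ psiMap '' stringPts (a - 1) (b - 1)
      ↔ ¬(0 < x.2.2 ∧ x.2.1 - x.2.2 < a) := by
        rw [psiMap_image_stringPts, Set.mem_sep_iff, and_iff_right hx]
    _ ↔ x.2.2 ≤ 0 ∨ a ≤ x.2.1 - x.2.2 := by rw [not_and_or, not_lt, not_lt]
    _ ↔ x.2.2 = 0 ∨ x.2.1 - x.2.2 = a := by rw [h_nonneg.ge_iff_eq', h_le.ge_iff_eq]

/-- for `λ₁, λ₂ ≥ 1` and `x ∈ P(λ₁, λ₂)`, `x` does not lie in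
`ψ(P(λ₁-1, λ₂-1))` iff `x₃ = 0` or `x₂ - x₃ = λ₁`; consequently the candidate big atom
is `A(λ₁,λ₂) = P(λ₁,λ₂) \ ψ(P(λ₁-1,λ₂-1)) = {x ∈ P : x₃ = 0} ∪ {x ∈ P : x₂ - x₃ = λ₁}`. -/
theorem complement_of_psi_image_characterization
    (lam1 lam2 : ℤ) (h1 : 1 ≤ lam1) (h2 : 1 ≤ lam2) :
    (∀ x ∈ stringPts lam1 lam2,
      (x ∉ psiMap '' stringPts (lam1 - 1) (lam2 - 1) ↔
        x.2.2 = 0 ∨ x.2.1 - x.2.2 = lam1)) ∧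
    stringPts lam1 lam2 \ psiMap '' stringPts (lam1 - 1) (lam2 - 1)
      = {x ∈ stringPts lam1 lam2 | x.2.2 = 0}
        ∪ {x ∈ stringPts lam1 lam2 | x.2.1 - x.2.2 = lam1} := by
  have notMem_iff : ∀ x ∈ stringPts lam1 lam2,
      (x ∉ psiMap '' stringPts (lam1 - 1) (lam2 - 1) ↔
        x.2.2 = 0 ∨ x.2.1 - x.2.2 = lam1) :=
    fun _ hx => notMem_psiMap_image_stringPts_iff hx
  exact ⟨notMem_iff, (Set.sep_ext_iff.2 notMem_iff).trans Set.sep_or⟩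
end

section
/- Let λ_1, λ_2 ≥ 1 be integers and let A(λ_1,λ_2) := P(λ_1,λ_2) \ ψ(P(λ_1 − 1, λ_2 − 1)). Then the weight map is injective on A(λ_1,λ_2): if x, y ∈ A(λ_1,λ_2) satisfy x_2 = y_2 and x_1 + x_3 = y_1 + y_3, then x = y. (Equivalently, A(λ_1,λ_2) contains at most one element of each sl_3-weight, since the weight of x is λ − x_2 α_1 − (x_1 + x_3) α_2.) -/
/-!
Passing from `(a - 1, b - 1)` to `(a, b)` along `ψ` preserves the inequalities `0 ≤ x₁`, `x₃ ≤ b`,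
`x₃ ≤ x₂` and `x₁ ≤ b - 2x₃ + x₂`, and makes the remaining two, `0 ≤ x₃` and `x₂ ≤ a + x₃`, strict.
So the image of `ψ` is the part of `P(a, b)` where `max 0 (x₂ - a) < x₃`. On its complement
`x₃ = max 0 (x₂ - a)` is a function of `x₂`, and then `x₂` and `x₁ + x₃` determine the point.
-/

theorem max_le_of_mem_stringPts {a b : ℤ} {x : ℤ × ℤ × ℤ} (hx : x ∈ stringPts a b) :
    max 0 (x.2.1 - a) ≤ x.2.2 := by
  obtain ⟨-, nonneg, -, -, upper, -⟩ := hx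
  exact max_le nonneg (sub_left_le_of_le_add upper)

theorem mem_psiMap_image_stringPts_iff {a b : ℤ} {x : ℤ × ℤ × ℤ} :
    x ∈ psiMap '' stringPts (a - 1) (b - 1) ↔
      x ∈ stringPts a b ∧ max 0 (x.2.1 - a) < x.2.2 := by
  constructor
  · rintro ⟨y, hy, rfl⟩
    simp only [stringPts, psiMap, Set.mem_ofPred_eq] at hy ⊢
    omega
  · rintro ⟨hx, hlt⟩
    refine ⟨(x.1, x.2.1 - 1, x.2.2 - 1), ?_, by simp [psiMap]⟩
    simp only [stringPts, Set.mem_ofPred_eq] at hx ⊢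
    omega

theorem mem_stringPts_diff_psiMap_image_iff {a b : ℤ} {x : ℤ × ℤ × ℤ} :
    x ∈ stringPts a b \ psiMap '' stringPts (a - 1) (b - 1) ↔
      x ∈ stringPts a b ∧ x.2.2 = max 0 (x.2.1 - a) := by
  rw [Set.mem_sdiff, mem_psiMap_image_stringPts_iff, not_and, not_lt]
  refine and_congr_right fun hx => ⟨fun hle => ?_, fun heq _ => heq.le⟩
  exact (hle hx).antisymm (max_le_of_mem_stringPts hx)

/-- for `λ₁, λ₂ ≥ 1`, the weight map is injective on
`A(λ₁,λ₂) = P(λ₁,λ₂) \ ψ(P(λ₁-1,λ₂-1))`: since the `sl₃`-weight of `x` is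
`λ - x₂ α₁ - (x₁ + x₃) α₂`, if `x, y ∈ A(λ₁,λ₂)` have `x₂ = y₂` and
`x₁ + x₃ = y₁ + y₃`, then `x = y`. -/
theorem weight_injective_on_atom
    (lam1 lam2 : ℤ) (h1 : 1 ≤ lam1) (h2 : 1 ≤ lam2) :
    ∀ x ∈ stringPts lam1 lam2 \ psiMap '' stringPts (lam1 - 1) (lam2 - 1),
      ∀ y ∈ stringPts lam1 lam2 \ psiMap '' stringPts (lam1 - 1) (lam2 - 1),
        x.2.1 = y.2.1 → x.1 + x.2.2 = y.1 + y.2.2 → x = y := by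
  intro x hx y hy h_snd h_sum
  have h_thd : x.2.2 = y.2.2 := by
    rw [(mem_stringPts_diff_psiMap_image_iff.mp hx).2,
      (mem_stringPts_diff_psiMap_image_iff.mp hy).2, h_snd]
  have h_fst : x.1 = y.1 := by rwa [h_thd, add_left_inj] at h_sum
  exact Prod.ext h_fst (Prod.ext h_snd h_thd)
end

section
/- Let λ_1, λ_2 ≥ 1 be integers and let A(λ_1,λ_2) := P(λ_1,λ_2) \ ψ(P(λ_1 − 1, λ_2 − 1)). Then for every x ∈ P(λ_1,λ_2) there exists a unique y ∈ A(λ_1,λ_2) with y_2 = x_2 and y_1 + y_3 = x_1 + x_3. (Equivalently, A(λ_1,λ_2) contains exactly one element of each weight occurring in the crystal B(λ_1ω_1 + λ_2ω_2), i.e. A(λ_1,λ_2) is a big atom.) -/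
/-!
Points of equal weight lie on a line in the direction `(-1, 0, 1)`. On such a line the lower bounds
`0 ≤ x₃` and `x₂ - a ≤ x₃` for points of `P(a,b)` depend on the common value of `x₂` only, and
moving down in `x₃` violates no other inequality before one of these two. Hence every nonempty
weight fibre of `P(a,b)` contains its point with `x₃ = max 0 (x₂ - a)`. The map `ψ` identifies
`P(a-1,b-1)` with the points of `P(a,b)` at which both bounds are strict, so these lowest points are
exactly what remains after `ψ(P(a-1,b-1))` is removed.
-/

/-- The lower bound `max 0 (x₂ - a)` that the inequalities `0 ≤ x₃` and `x₂ ≤ a + x₃` of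
`stringPts a b` impose on the third coordinate of a point with second coordinate `x₂`. -/
def thirdLowerBound (a x₂ : ℤ) : ℤ := max 0 (x₂ - a)

/-- The point with third coordinate `t` on the line of points of the same weight as `x`. The weight
is encoded by the pair `(x₂, x₁ + x₃)`. -/
def weightLinePoint (x : ℤ × ℤ × ℤ) (t : ℤ) : ℤ × ℤ × ℤ := (x.1 + x.2.2 - t, x.2.1, t)

theorem eq_weightLinePoint_iff {x y : ℤ × ℤ × ℤ} :
    y = weightLinePoint x y.2.2 ↔ y.2.1 = x.2.1 ∧ y.1 + y.2.2 = x.1 + x.2.2 := by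
  simp only [weightLinePoint, Prod.ext_iff, eq_sub_iff_add_eq, and_true]
  exact and_comm

section StringPts

variable {a b : ℤ} {x : ℤ × ℤ × ℤ}

theorem thirdLowerBound_le_of_mem_stringPts (hx : x ∈ stringPts a b) :
    thirdLowerBound a x.2.1 ≤ x.2.2 := by
  obtain ⟨-, h_nonneg, -, -, h_le_add, -⟩ := hx
  exact max_le h_nonneg (sub_left_le_of_le_add h_le_add)

theorem weightLinePoint_mem_stringPts {t : ℤ} (hx : x ∈ stringPts a b)
    (h_lower : thirdLowerBound a x.2.1 ≤ t) (h_upper : t ≤ x.2.2) :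
    weightLinePoint x t ∈ stringPts a b := by
  obtain ⟨ht_nonneg, ht_sub⟩ := max_le_iff.mp h_lower
  simp only [stringPts, weightLinePoint, Set.mem_ofPred_eq] at hx ⊢
  omega

theorem mem_stringPts_sub_one_iff :
    x ∈ stringPts (a - 1) (b - 1) ↔
      psiMap x ∈ stringPts a b ∧ thirdLowerBound a (psiMap x).2.1 < (psiMap x).2.2 := by
  simp only [stringPts, psiMap, thirdLowerBound, Set.mem_ofPred_eq, max_lt_iff]
  omega

end StringPts

theorem psiMap_surjective : Function.Surjective psiMap :=
  fun x => ⟨(x.1, x.2.1 - 1, x.2.2 - 1), by simp [psiMap]⟩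

theorem psiMap_image_stringPts_sub_one (a b : ℤ) :
    psiMap '' stringPts (a - 1) (b - 1) =
      {x ∈ stringPts a b | thirdLowerBound a x.2.1 < x.2.2} := by
  have h_preimage : stringPts (a - 1) (b - 1) =
      psiMap ⁻¹' {x ∈ stringPts a b | thirdLowerBound a x.2.1 < x.2.2} :=
    Set.ext fun _ => mem_stringPts_sub_one_iff
  rw [h_preimage, Set.image_preimage_eq _ psiMap_surjective]

theorem stringPts_sdiff_psiMap_image (a b : ℤ) :
    stringPts a b \ psiMap '' stringPts (a - 1) (b - 1) =
      {x ∈ stringPts a b | x.2.2 = thirdLowerBound a x.2.1} := by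
  ext x
  rw [psiMap_image_stringPts_sub_one, Set.mem_sdiff, Set.mem_sep_iff, Set.mem_sep_iff]
  refine and_congr_right fun hx => ?_
  have h_le : thirdLowerBound a x.2.1 ≤ x.2.2 := thirdLowerBound_le_of_mem_stringPts hx
  rw [not_and, forall_prop_of_true hx, not_lt, h_le.ge_iff_eq']

/-- for `λ₁, λ₂ ≥ 1` and every `x ∈ P(λ₁,λ₂)` there is a unique
`y ∈ A(λ₁,λ₂) = P(λ₁,λ₂) \ ψ(P(λ₁-1,λ₂-1))` with the same weight, i.e. with
`y₂ = x₂` and `y₁ + y₃ = x₁ + x₃`.  (So `A(λ₁,λ₂)` contains exactly one element of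
each weight occurring in `B(λ₁ω₁ + λ₂ω₂)`: it is a big atom.) -/
theorem atom_contains_unique_element_of_each_weight
    (lam1 lam2 : ℤ) (h1 : 1 ≤ lam1) (h2 : 1 ≤ lam2) :
    ∀ x ∈ stringPts lam1 lam2,
      ∃! y : ℤ × ℤ × ℤ,
        y ∈ stringPts lam1 lam2 \ psiMap '' stringPts (lam1 - 1) (lam2 - 1) ∧
        y.2.1 = x.2.1 ∧ y.1 + y.2.2 = x.1 + x.2.2 := by
  intro x hx
  simp only [stringPts_sdiff_psiMap_image, ← eq_weightLinePoint_iff]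
  refine ⟨weightLinePoint x (thirdLowerBound lam1 x.2.1), ⟨⟨?_, rfl⟩, rfl⟩, ?_⟩
  · exact weightLinePoint_mem_stringPts hx le_rfl (thirdLowerBound_le_of_mem_stringPts hx)
  · rintro y ⟨⟨-, h_third⟩, h_line⟩
    have h_second : y.2.1 = x.2.1 := (eq_weightLinePoint_iff.mp h_line).1
    rwa [h_third, h_second] at h_line
end

section
/- Let λ_1, λ_2 ≥ 1 be integers and let A(λ_1,λ_2) := P(λ_1,λ_2) \ ψ(P(λ_1 − 1, λ_2 − 1)). Then A(λ_1,λ_2) is stable under moving along 2-strings: if x = (x_1,x_2,x_3) ∈ A(λ_1,λ_2) and (x_1 + 1, x_2, x_3) ∈ P(λ_1,λ_2), then (x_1 + 1, x_2, x_3) ∈ A(λ_1,λ_2); likewise, if x_1 ≥ 1 and (x_1 − 1, x_2, x_3) ∈ P(λ_1,λ_2), then (x_1 − 1, x_2, x_3) ∈ A(λ_1,λ_2). -/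
/-!
The set `ψ(P(a - 1, b - 1))` is contained in `P(a, b)` and cut out there by the strict inequalities
`0 < x₃` and `x₂ < a + x₃`. Hence its complement `A(a, b)` is the union of the two faces `x₃ = 0`
and `x₂ = a + x₃`. Neither condition involves `x₁`, the only coordinate that changes along a
`2`-string.
-/

/-- The candidate big atom `A(a, b) = P(a, b) \ ψ(P(a - 1, b - 1))`. The parameters range over
all integers: `P(a - 1, b - 1)` is empty if `a` or `b` is not positive. -/
def bigAtom (a b : ℤ) : Set (ℤ × ℤ × ℤ) :=
  stringPts a b \ psiMap '' stringPts (a - 1) (b - 1)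

section BigAtom

variable {a b : ℤ} {x y : ℤ × ℤ × ℤ}

lemma mem_image_psiMap_iff {s : Set (ℤ × ℤ × ℤ)} :
    x ∈ psiMap '' s ↔ (x.1, x.2.1 - 1, x.2.2 - 1) ∈ s :=
  Set.mem_image_iff_of_inverse (g := fun x : ℤ × ℤ × ℤ ↦ (x.1, x.2.1 - 1, x.2.2 - 1))
    (fun _ ↦ by simp [psiMap]) (fun _ ↦ by simp [psiMap])

lemma mem_image_psiMap_stringPts_iff :
    x ∈ psiMap '' stringPts (a - 1) (b - 1) ↔
      x ∈ stringPts a b ∧ 0 < x.2.2 ∧ x.2.1 < a + x.2.2 := by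
  simp only [mem_image_psiMap_iff, stringPts, Set.mem_ofPred_eq]
  omega

lemma mem_bigAtom_iff :
    x ∈ bigAtom a b ↔ x ∈ stringPts a b ∧ (x.2.2 = 0 ∨ x.2.1 = a + x.2.2) := by
  rw [bigAtom, Set.mem_sdiff, mem_image_psiMap_stringPts_iff]
  refine and_congr_right fun hx ↦ ?_
  have hx₃ : 0 ≤ x.2.2 := hx.2.1
  have hx₂ : x.2.1 ≤ a + x.2.2 := hx.2.2.2.2.1
  simp only [hx, true_and]
  omega

theorem atom_stable_along_two_strings_general (hx : x ∈ bigAtom a b) (hy : y ∈ stringPts a b)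
    (hyx : y.2 = x.2) : y ∈ bigAtom a b := by
  obtain ⟨-, hface⟩ := mem_bigAtom_iff.mp hx
  exact mem_bigAtom_iff.mpr ⟨hy, hyx ▸ hface⟩

end BigAtom

/-- for `λ₁, λ₂ ≥ 1`, the set
`A(λ₁,λ₂) = P(λ₁,λ₂) \ ψ(P(λ₁-1,λ₂-1))` is stable under moving along `2`-strings
(the crystal operators `f₂` and `e₂` act on string coordinates for the word `(2,1,2)`
by `x ↦ (x₁ ± 1, x₂, x₃)` whenever the result lies in the polytope). -/
theorem atom_stable_along_two_strings
    (lam1 lam2 : ℤ) (h1 : 1 ≤ lam1) (h2 : 1 ≤ lam2) :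
    ∀ x ∈ stringPts lam1 lam2 \ psiMap '' stringPts (lam1 - 1) (lam2 - 1),
      ((x.1 + 1, x.2.1, x.2.2) ∈ stringPts lam1 lam2 →
        (x.1 + 1, x.2.1, x.2.2) ∈
          stringPts lam1 lam2 \ psiMap '' stringPts (lam1 - 1) (lam2 - 1)) ∧
      (1 ≤ x.1 → (x.1 - 1, x.2.1, x.2.2) ∈ stringPts lam1 lam2 →
        (x.1 - 1, x.2.1, x.2.2) ∈
          stringPts lam1 lam2 \ psiMap '' stringPts (lam1 - 1) (lam2 - 1)) :=
  fun _ hx ↦ ⟨fun hy ↦ atom_stable_along_two_strings_general hx hy rfl,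
    fun _ hy ↦ atom_stable_along_two_strings_general hx hy rfl⟩
end
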